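/- arXiv:2311.01748 — 3 statements merged into one kernel-verified Lean document; each statement's English description precedes it below -/
import Mathlib

section
/- (Data Processing Inequality for 0 < α < 1.) Let 0 < α < 1 and z ≥ max{α, 1 − α}. Let Ψ be a ℂ-linear map from n×n complex matrices to m×m complex matrices such that Ψ maps positive semidefinite matrices to positive semidefinite matrices and Tr(Ψ(A)) = Tr(A) for all A. Then for all n×n positive semidefinite complex matrices ρ, σ: Q_{α,z}(Ψ(ρ) ‖ Ψ(σ)) ≥ Q_{α,z}(ρ‖σ). -/
open Matrix
open scoped ComplexOrder

/-- Real power of a positive semidefinite matrix via the spectral decomposition,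
applying `x ^ t` (real `rpow`, so with the convention `0 ^ t = 0` for `t ≠ 0`)
to the eigenvalues; returns `0` if the matrix is not Hermitian. -/
noncomputable def mpow {n : Type*} [Fintype n] [DecidableEq n]
    (A : Matrix n n ℂ) (t : ℝ) : Matrix n n ℂ :=
  if hA : A.IsHermitian then
    (hA.eigenvectorUnitary : Matrix n n ℂ) *
      Matrix.diagonal (fun i => ((hA.eigenvalues i ^ t : ℝ) : ℂ)) *
      star (hA.eigenvectorUnitary : Matrix n n ℂ)
  else 0


/-- The α-z-Rényi quantity `Q_{α,z}(ρ‖σ) = Tr((σ^((1−α)/2z) ρ^(α/z) σ^((1−α)/2z))^z)`. -/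
noncomputable def Qaz {n : Type*} [Fintype n] [DecidableEq n]
    (α z : ℝ) (ρ σ : Matrix n n ℂ) : ℝ :=
  ((mpow (mpow σ ((1 - α) / (2 * z)) * mpow ρ (α / z) * mpow σ ((1 - α) / (2 * z))) z).trace).re


namespace QDPI

open Complex

/-- Complex power of a positive definite matrix. -/
noncomputable def cp {n : Type*} [Fintype n] [DecidableEq n]
    (A : Matrix n n ℂ) (w : ℂ) : Matrix n n ℂ :=
  if hA : A.IsHermitian then
    (hA.eigenvectorUnitary : Matrix n n ℂ) *
      Matrix.diagonal (fun i => Complex.exp (w * (Real.log (hA.eigenvalues i) : ℝ))) *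
      star (hA.eigenvectorUnitary : Matrix n n ℂ)
  else 0

/-- Trace of a real power. -/
noncomputable def tp {n : Type*} [Fintype n] [DecidableEq n]
    (A : Matrix n n ℂ) (t : ℝ) : ℝ := (cp A (t : ℂ)).trace.re

section basics

variable {n : Type*} [Fintype n] [DecidableEq n] {A B : Matrix n n ℂ}

lemma exp_log_rpow {x : ℝ} (hx : 0 < x) (t : ℝ) :
    Complex.exp ((t : ℂ) * (Real.log x : ℝ)) = ((x ^ t : ℝ) : ℂ) := by
  rw [Real.rpow_def_of_pos hx, mul_comm]
  push_cast
  rfl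

lemma cp_eq (hA : A.IsHermitian) (w : ℂ) : cp A w =
    (hA.eigenvectorUnitary : Matrix n n ℂ) *
      Matrix.diagonal (fun i => Complex.exp (w * (Real.log (hA.eigenvalues i) : ℝ))) *
      star (hA.eigenvectorUnitary : Matrix n n ℂ) := by
  simp only [cp, dif_pos hA]

lemma mpow_eq_cp (hA : A.PosDef) (t : ℝ) : mpow A t = cp A (t : ℂ) := by
  rw [cp_eq hA.1, mpow, dif_pos hA.1]
  congr 2
  ext i
  simp only [exp_log_rpow (hA.eigenvalues_pos _)]

lemma conj_mul_aux (U : Matrix.unitaryGroup n ℂ) (D D' : Matrix n n ℂ) :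
    ((U : Matrix n n ℂ) * D * star (U : Matrix n n ℂ)) *
      ((U : Matrix n n ℂ) * D' * star (U : Matrix n n ℂ)) =
      (U : Matrix n n ℂ) * (D * D') * star (U : Matrix n n ℂ) := by
  have h : star (U : Matrix n n ℂ) * (U : Matrix n n ℂ) = 1 := Unitary.coe_star_mul_self U
  calc _ = (U : Matrix n n ℂ) * D * (star (U : Matrix n n ℂ) * (U : Matrix n n ℂ)) * D' *
        star (U : Matrix n n ℂ) := by simp only [Matrix.mul_assoc]
    _ = _ := by rw [h]; simp only [Matrix.mul_assoc, Matrix.one_mul]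

lemma cp_mul (hA : A.IsHermitian) (w v : ℂ) : cp A w * cp A v = cp A (w + v) := by
  rw [cp_eq hA, cp_eq hA, cp_eq hA, conj_mul_aux, Matrix.diagonal_mul_diagonal]
  congr 3
  ext i
  rw [← Complex.exp_add, add_mul]

lemma cp_zero (hA : A.IsHermitian) : cp A 0 = 1 := by
  rw [cp_eq hA]
  simp

lemma cp_one (hA : A.PosDef) : cp A 1 = A := by
  conv_rhs => rw [hA.1.spectral_theorem, Unitary.conjStarAlgAut_apply]
  rw [cp_eq hA.1]
  congr 3
  ext i
  have := exp_log_rpow (hA.eigenvalues_pos i) 1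
  simpa using this

lemma cp_star (hA : A.IsHermitian) (w : ℂ) : (cp A w)ᴴ = cp A (starRingEnd ℂ w) := by
  rw [cp_eq hA, cp_eq hA]
  simp only [Matrix.conjTranspose_mul, Matrix.star_eq_conjTranspose,
    Matrix.conjTranspose_conjTranspose, Matrix.diagonal_conjTranspose, Matrix.mul_assoc]
  congr 3
  ext i
  simp [← Complex.exp_conj]

lemma cp_trace (hA : A.IsHermitian) (w : ℂ) : (cp A w).trace =
    ∑ i, Complex.exp (w * (Real.log (hA.eigenvalues i) : ℝ)) := by
  rw [cp_eq hA, Matrix.trace_mul_cycle, Unitary.coe_star_mul_self, Matrix.one_mul,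
    Matrix.trace_diagonal]

lemma tp_eq (hA : A.PosDef) (t : ℝ) : tp A t = ∑ i, hA.1.eigenvalues i ^ t := by
  rw [tp, cp_trace hA.1]
  simp only [exp_log_rpow (hA.eigenvalues_pos _)]
  rw [← Complex.ofReal_sum, Complex.ofReal_re]

lemma cp_trace_real (hA : A.PosDef) (t : ℝ) : (cp A (t : ℂ)).trace = (tp A t : ℂ) := by
  rw [tp_eq hA, cp_trace hA.1]
  simp only [exp_log_rpow (hA.eigenvalues_pos _)]
  rw [← Complex.ofReal_sum]

lemma cp_isUnit (hA : A.IsHermitian) (w : ℂ) : IsUnit (cp A w) :=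
  IsUnit.of_mul_eq_one (cp A (-w)) (by rw [cp_mul hA, add_neg_cancel, cp_zero hA])

lemma cp_herm (hA : A.IsHermitian) (t : ℝ) : (cp A (t : ℂ))ᴴ = cp A (t : ℂ) := by
  rw [cp_star hA, Complex.conj_ofReal]

lemma posDef_conj {X : Matrix n n ℂ} (hB : B.PosDef) (hX : IsUnit X) : (X * B * Xᴴ).PosDef := by
  apply hB.mul_mul_conjTranspose_same
  exact Matrix.vecMul_injective_of_isUnit hX

lemma cp_posDef (hA : A.IsHermitian) (t : ℝ) : (cp A (t : ℂ)).PosDef := by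
  have : cp A (t : ℂ) = cp A ((t/2 : ℝ) : ℂ) * 1 * (cp A ((t/2 : ℝ) : ℂ))ᴴ := by
    rw [Matrix.mul_one, cp_herm hA, cp_mul hA]
    congr 1
    push_cast
    ring
  rw [this]
  exact posDef_conj Matrix.PosDef.one (cp_isUnit hA _)

lemma sandwich_posDef (hA : A.IsHermitian) (hB : B.PosDef) (t : ℝ) :
    (cp A (t : ℂ) * B * cp A (t : ℂ)).PosDef := by
  have := posDef_conj hB (cp_isUnit hA (t : ℂ))
  rwa [cp_herm hA] at this

lemma tp_charpoly {m : Type*} [Fintype m] [DecidableEq m] {B : Matrix m m ℂ}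
    (hA : A.PosDef) (hB : B.PosDef) (h : A.charpoly = B.charpoly) (t : ℝ) :
    tp A t = tp B t := by
  have key : ∀ {k : Type _} [Fintype k] [DecidableEq k] {C : Matrix k k ℂ} (hC : C.PosDef),
      tp C t = (C.charpoly.roots.map (fun x => x.re ^ t)).sum := by
    intro k _ _ C hC
    rw [tp_eq hC, hC.1.roots_charpoly_eq_eigenvalues, Multiset.map_map]
    rfl
  have key2 : ∀ {k : Type _} [Fintype k] [DecidableEq k] {C : Matrix k k ℂ} (hC : C.PosDef),
      tp C t = (C.charpoly.roots.map (fun x => x.re ^ t)).sum := by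
    intro k _ _ C hC
    rw [tp_eq hC, hC.1.roots_charpoly_eq_eigenvalues, Multiset.map_map]
    rfl
  rw [key hA, key2 hB, h]

lemma tp_cp (hA : A.PosDef) (s t : ℝ) : tp (cp A (s : ℂ)) t = tp A (s * t) := by
  have h1 := cp_posDef hA.1 s
  have h2 : (cp A (s : ℂ)).charpoly =
      (Matrix.diagonal (fun i => ((hA.1.eigenvalues i ^ s : ℝ) : ℂ))).charpoly := by
    rw [cp_eq hA.1, Matrix.charpoly_mul_comm, ← Matrix.mul_assoc, Unitary.coe_star_mul_self,
      Matrix.one_mul]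
    simp only [exp_log_rpow (hA.eigenvalues_pos _)]
  have h3 : (cp A (s : ℂ)).charpoly.roots =
      Multiset.map (fun i => ((hA.1.eigenvalues i ^ s : ℝ) : ℂ)) Finset.univ.val := by
    rw [h2, Matrix.charpoly_diagonal, Polynomial.roots_prod]
    · simp
    · exact Finset.prod_ne_zero_iff.mpr fun i _ => Polynomial.X_sub_C_ne_zero _
  have h4 : tp (cp A (s : ℂ)) t =
      ((cp A (s : ℂ)).charpoly.roots.map (fun x => x.re ^ t)).sum := by
    rw [tp_eq h1, h1.1.roots_charpoly_eq_eigenvalues, Multiset.map_map]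
    rfl
  rw [h4, h3, Multiset.map_map, tp_eq hA]
  change ∑ i, _ = _
  refine Finset.sum_congr rfl fun i _ => ?_
  simp only [Function.comp, Complex.ofReal_re]
  rw [Real.rpow_mul (hA.eigenvalues_pos i).le]

lemma tp_nonneg (hA : A.PosDef) (t : ℝ) : 0 ≤ tp A t := by
  rw [tp_eq hA]
  exact Finset.sum_nonneg fun i _ => Real.rpow_nonneg (hA.eigenvalues_pos i).le _

lemma tp_pos [Nonempty n] (hA : A.PosDef) (t : ℝ) : 0 < tp A t := by
  rw [tp_eq hA]
  exact Finset.sum_pos (fun i _ => Real.rpow_pos_of_pos (hA.eigenvalues_pos i) _)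
    Finset.univ_nonempty

lemma unitary_row (W : Matrix n n ℂ) (h : W * Wᴴ = 1) (i : n) : ∑ j, ‖W i j‖ ^ 2 = 1 := by
  have := congrFun (congrFun h i) i
  rw [Matrix.mul_apply, Matrix.one_apply_eq] at this
  simp only [Matrix.conjTranspose_apply, RCLike.star_def, Complex.mul_conj'] at this
  exact_mod_cast this

lemma unitary_col (W : Matrix n n ℂ) (h : Wᴴ * W = 1) (j : n) : ∑ i, ‖W i j‖ ^ 2 = 1 := by
  have := congrFun (congrFun h j) j
  rw [Matrix.mul_apply, Matrix.one_apply_eq] at this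
  simp only [Matrix.conjTranspose_apply, RCLike.star_def, Complex.conj_mul'] at this
  exact_mod_cast this

lemma klein (hA : A.PosDef) (hB : B.PosDef) (c₁ c₂ c₃ s₁ s₂ s₃ s₄ : ℝ)
    (h : ∀ a b : ℝ, 0 < a → 0 < b → 0 ≤ c₁ * a ^ s₁ + c₂ * b ^ s₂ + c₃ * (a ^ s₃ * b ^ s₄)) :
    0 ≤ c₁ * tp A s₁ + c₂ * tp B s₂ + c₃ * (cp A (s₃ : ℂ) * cp B (s₄ : ℂ)).trace.re := by
  set U := hA.1.eigenvectorUnitary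
  set V := hB.1.eigenvectorUnitary
  set W : Matrix n n ℂ := star (U : Matrix n n ℂ) * (V : Matrix n n ℂ) with hW
  have hU1 : star (U : Matrix n n ℂ) * (U : Matrix n n ℂ) = 1 := Unitary.coe_star_mul_self U
  have hU2 : (U : Matrix n n ℂ) * star (U : Matrix n n ℂ) = 1 := Unitary.coe_mul_star_self U
  have hV1 : star (V : Matrix n n ℂ) * (V : Matrix n n ℂ) = 1 := Unitary.coe_star_mul_self V
  have hV2 : (V : Matrix n n ℂ) * star (V : Matrix n n ℂ) = 1 := Unitary.coe_mul_star_self V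
  have hWs : Wᴴ = star (V : Matrix n n ℂ) * (U : Matrix n n ℂ) := by
    rw [hW, Matrix.conjTranspose_mul]; simp [Matrix.star_eq_conjTranspose]
  have hW1 : W * Wᴴ = 1 := by
    rw [hWs, hW, Matrix.mul_assoc, ← Matrix.mul_assoc _ (star (V : Matrix n n ℂ)), hV2,
      Matrix.one_mul, hU1]
  have hW2 : Wᴴ * W = 1 := by
    rw [hWs, hW, Matrix.mul_assoc, ← Matrix.mul_assoc _ (star (U : Matrix n n ℂ)), hU2,
      Matrix.one_mul, hV1]
  set a := hA.1.eigenvalues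
  set b := hB.1.eigenvalues
  have htr : (cp A (s₃ : ℂ) * cp B (s₄ : ℂ)).trace.re =
      ∑ i, ∑ j, (a i ^ s₃ * b j ^ s₄) * ‖W i j‖ ^ 2 := by
    rw [cp_eq hA.1, cp_eq hB.1]
    simp only [exp_log_rpow (hA.eigenvalues_pos _), exp_log_rpow (hB.eigenvalues_pos _)]
    have : ∀ D D' : Matrix n n ℂ, ((U : Matrix n n ℂ) * D * star (U : Matrix n n ℂ) *
        ((V : Matrix n n ℂ) * D' * star (V : Matrix n n ℂ))).trace =
        ((D * W) * (D' * Wᴴ)).trace := by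
      intro D D'
      rw [hWs, hW, Matrix.mul_assoc, Matrix.mul_assoc, Matrix.trace_mul_comm]
      simp only [Matrix.mul_assoc]
    rw [this, Matrix.trace, Complex.re_sum]
    refine Finset.sum_congr rfl fun i _ => ?_
    rw [Matrix.diag_apply, Matrix.mul_apply, Complex.re_sum]
    refine Finset.sum_congr rfl fun j _ => ?_
    rw [Matrix.diagonal_mul, Matrix.diagonal_mul, Matrix.conjTranspose_apply]
    have : ((a i ^ s₃ : ℝ) : ℂ) * W i j * (((b j ^ s₄ : ℝ) : ℂ) * star (W i j)) =
        ((a i ^ s₃ * b j ^ s₄ * ‖W i j‖ ^ 2 : ℝ) : ℂ) := by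
      have h2 : W i j * star (W i j) = ((‖W i j‖ ^ 2 : ℝ) : ℂ) := by
        rw [RCLike.star_def, Complex.mul_conj']; norm_cast
      rw [Complex.ofReal_mul, Complex.ofReal_mul, ← h2]; ring
    rw [this, Complex.ofReal_re]
  have e1 : tp A s₁ = ∑ i, ∑ j, a i ^ s₁ * ‖W i j‖ ^ 2 := by
    rw [tp_eq hA]
    refine Finset.sum_congr rfl fun i _ => ?_
    rw [← Finset.mul_sum, unitary_row W hW1, mul_one]
  have e2 : tp B s₂ = ∑ i, ∑ j, b j ^ s₂ * ‖W i j‖ ^ 2 := by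
    rw [tp_eq hB, Finset.sum_comm]
    refine Finset.sum_congr rfl fun i _ => ?_
    rw [← Finset.mul_sum, unitary_col W hW2, mul_one]
  rw [htr, e1, e2]
  simp only [Finset.mul_sum, ← Finset.sum_add_distrib]
  refine Finset.sum_nonneg fun i _ => Finset.sum_nonneg fun j _ => ?_
  have := mul_nonneg (h (a i) (b j) (hA.eigenvalues_pos i) (hB.eigenvalues_pos j))
    (sq_nonneg ‖W i j‖)
  linarith

end basics

section interp

/-- Entire function bounded on the strip `0 ≤ re ≤ 1`. -/
def Good (F : ℂ → ℂ) : Prop :=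
  Differentiable ℂ F ∧ ∃ C : ℝ, ∀ w : ℂ, 0 ≤ w.re → w.re ≤ 1 → ‖F w‖ ≤ C

lemma Good.const (c : ℂ) : Good (fun _ => c) := ⟨differentiable_const c, ‖c‖, fun _ _ _ => le_rfl⟩

lemma Good.add {F G : ℂ → ℂ} (hF : Good F) (hG : Good G) : Good (fun w => F w + G w) := by
  obtain ⟨h1, C, hC⟩ := hF
  obtain ⟨h2, D, hD⟩ := hG
  exact ⟨h1.add h2, C + D, fun w a b => (norm_add_le _ _).trans (add_le_add (hC w a b) (hD w a b))⟩

lemma Good.mul {F G : ℂ → ℂ} (hF : Good F) (hG : Good G) : Good (fun w => F w * G w) := by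
  obtain ⟨h1, C, hC⟩ := hF
  obtain ⟨h2, D, hD⟩ := hG
  refine ⟨h1.mul h2, C * D, fun w a b => ?_⟩
  rw [norm_mul]
  exact mul_le_mul (hC w a b) (hD w a b) (norm_nonneg _) ((norm_nonneg _).trans (hC w a b))

lemma Good.sum {ι : Type*} (s : Finset ι) {F : ι → ℂ → ℂ} (hF : ∀ i ∈ s, Good (F i)) :
    Good (fun w => ∑ i ∈ s, F i w) := by
  classical
  induction s using Finset.induction_on with
  | empty => simpa using Good.const 0
  | insert a s ha ih =>
    simp only [Finset.sum_insert ha]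
    exact (hF a (Finset.mem_insert_self _ _)).add
      (ih fun i hi => hF i (Finset.mem_insert_of_mem hi))

lemma Good.exp (x y l : ℝ) : Good (fun w => Complex.exp (((x : ℂ) * w + y) * (l : ℝ))) := by
  refine ⟨by fun_prop, Real.exp ((|x| + |y|) * |l|), fun w h0 h1 => ?_⟩
  rw [Complex.norm_exp]
  apply Real.exp_le_exp.mpr
  have : ((((x : ℂ) * w + y) * (l : ℝ))).re = (x * w.re + y) * l := by simp
  rw [this]
  refine (le_abs_self _).trans ?_
  rw [abs_mul]
  refine mul_le_mul_of_nonneg_right ?_ (abs_nonneg _)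
  refine (abs_add_le _ _).trans (add_le_add ?_ le_rfl)
  rw [abs_mul, abs_of_nonneg h0]
  exact mul_le_of_le_one_right (abs_nonneg _) h1

/-- Matrix valued version of `Good`. -/
def GoodM {m n : Type*} (F : ℂ → Matrix m n ℂ) : Prop := ∀ i j, Good (fun w => F w i j)

lemma GoodM.const {m n : Type*} (A : Matrix m n ℂ) : GoodM (fun _ => A) :=
  fun _ _ => Good.const _

lemma GoodM.mul {m n k : Type*} [Fintype n] {F : ℂ → Matrix m n ℂ} {G : ℂ → Matrix n k ℂ}
    (hF : GoodM F) (hG : GoodM G) : GoodM (fun w => F w * G w) := by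
  intro i j
  simp only [Matrix.mul_apply]
  exact Good.sum _ fun l _ => (hF i l).mul (hG l j)

lemma GoodM.trace {n : Type*} [Fintype n] {F : ℂ → Matrix n n ℂ}
    (hF : GoodM F) : Good (fun w => (F w).trace) := by
  simp only [Matrix.trace, Matrix.diag_apply]
  exact Good.sum _ fun l _ => hF l l

lemma GoodM.map {m n : Type*} [Fintype n] [DecidableEq n] [Fintype m] [DecidableEq m]
    {F : ℂ → Matrix n n ℂ} (hF : GoodM F) (Ψ : Matrix n n ℂ →ₗ[ℂ] Matrix m m ℂ) :
    GoodM (fun w => Ψ (F w)) := by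
  intro i j
  have : ∀ w, Ψ (F w) i j = ∑ k, ∑ l, F w k l * Ψ (Matrix.single k l 1) i j := by
    intro w
    conv_lhs => rw [Matrix.matrix_eq_sum_single (F w)]
    rw [map_sum, Matrix.sum_apply]
    refine Finset.sum_congr rfl fun k _ => ?_
    rw [map_sum, Matrix.sum_apply]
    refine Finset.sum_congr rfl fun l _ => ?_
    have : Matrix.single k l (F w k l) = F w k l • Matrix.single k l (1 : ℂ) := by
      rw [Matrix.smul_single, smul_eq_mul, mul_one]
    rw [this, map_smul, Matrix.smul_apply, smul_eq_mul]
  simp only [this]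
  exact Good.sum _ fun k _ => Good.sum _ fun l _ => (hF k l).mul (Good.const _)

lemma GoodM.cp {n : Type*} [Fintype n] [DecidableEq n] {A : Matrix n n ℂ}
    (hA : A.IsHermitian) (x y : ℝ) : GoodM (fun w => cp A ((x : ℂ) * w + y)) := by
  simp only [cp_eq hA]
  refine (GoodM.mul (GoodM.const _) ?_).mul (GoodM.const _)
  intro i j
  by_cases h : i = j
  · subst h
    simp only [Matrix.diagonal_apply_eq]
    exact Good.exp _ _ _
  · simp only [Matrix.diagonal_apply_ne _ h]
    exact Good.const 0

lemma Good.threeLines {F : ℂ → ℂ} (hF : Good F) {a b : ℝ}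
    (ha : ∀ t : ℝ, ‖F (t * Complex.I)‖ ≤ a) (hb : ∀ t : ℝ, ‖F (1 + t * Complex.I)‖ ≤ b)
    {θ : ℝ} (h0 : 0 ≤ θ) (h1 : θ ≤ 1) : ‖F θ‖ ≤ a ^ (1 - θ) * b ^ θ := by
  obtain ⟨hd, C, hC⟩ := hF
  have := Complex.HadamardThreeLines.norm_le_interp_of_mem_verticalClosedStrip₀₁' F
    (z := (θ : ℂ)) (a := a) (b := b) ?_ hd.diffContOnCl ?_ ?_ ?_
  · simpa using this
  · simp [Complex.HadamardThreeLines.verticalClosedStrip, h0, h1]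
  · refine ⟨C, ?_⟩
    rintro _ ⟨w, hw, rfl⟩
    exact hC w hw.1 hw.2
  · intro z hz
    have : z = (z.im : ℂ) * Complex.I := by
      apply Complex.ext <;> simp
      exact hz
    rw [this]; exact ha _
  · intro z hz
    have : z = 1 + (z.im : ℂ) * Complex.I := by
      apply Complex.ext <;> simp
      exact hz
    rw [this]; exact hb _

end interp

section cs

/-- Squared Hilbert-Schmidt norm. -/
noncomputable def hs {m n : Type*} [Fintype m] [Fintype n] (G : Matrix m n ℂ) : ℝ :=
  ∑ i, ∑ j, ‖G i j‖ ^ 2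

variable {m n k : Type*} [Fintype m] [Fintype n] [Fintype k]

lemma hs_trace (G : Matrix m n ℂ) : ((hs G : ℝ) : ℂ) = (G * Gᴴ).trace := by
  simp only [hs, Matrix.trace, Matrix.diag_apply, Matrix.mul_apply, Matrix.conjTranspose_apply,
    RCLike.star_def, Complex.mul_conj']
  push_cast
  rfl

lemma hs_trace' (G : Matrix m n ℂ) : ((hs G : ℝ) : ℂ) = (Gᴴ * G).trace := by
  rw [hs_trace, Matrix.trace_mul_comm]

lemma cs_basic (G : Matrix m n ℂ) (H : Matrix n m ℂ) :
    ‖(G * H).trace‖ ≤ (hs G + hs H) / 2 := by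
  have e : hs H = ∑ i, ∑ j, ‖H j i‖ ^ 2 := by rw [hs, Finset.sum_comm]
  rw [e, hs]
  simp only [Matrix.trace, Matrix.diag_apply, Matrix.mul_apply]
  rw [← Finset.sum_add_distrib, Finset.sum_div]
  refine (norm_sum_le _ _).trans (Finset.sum_le_sum fun i _ => ?_)
  rw [← Finset.sum_add_distrib, Finset.sum_div]
  refine (norm_sum_le _ _).trans (Finset.sum_le_sum fun j _ => ?_)
  rw [norm_mul]
  nlinarith [sq_nonneg (‖G i j‖ - ‖H j i‖)]

lemma cs_psd [DecidableEq m] {P : Matrix m m ℂ} (hP : P.PosSemidef) (C : Matrix m n ℂ)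
    (D : Matrix n m ℂ) :
    ‖(P * (C * D)).trace‖ ≤ ((P * (C * Cᴴ)).trace.re + (P * (Dᴴ * D)).trace.re) / 2 := by
  obtain ⟨X, rfl⟩ : ∃ X : Matrix m m ℂ, P = Xᴴ * X := by
    open scoped MatrixOrder in
    obtain ⟨X, hX⟩ := CStarAlgebra.nonneg_iff_eq_star_mul_self.mp hP.nonneg
    exact ⟨X, hX⟩
  have h := cs_basic (X * C) (D * Xᴴ)
  have e1 : (Xᴴ * X * (C * D)).trace = (X * C * (D * Xᴴ)).trace := by
    rw [Matrix.mul_assoc, Matrix.trace_mul_comm]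
    simp only [Matrix.mul_assoc]
  have e2 : ((hs (X * C) : ℝ) : ℂ) = (Xᴴ * X * (C * Cᴴ)).trace := by
    rw [hs_trace, Matrix.mul_assoc Xᴴ, Matrix.trace_mul_comm Xᴴ, Matrix.conjTranspose_mul]
    simp only [Matrix.mul_assoc]
  have e3 : ((hs (D * Xᴴ) : ℝ) : ℂ) = (Xᴴ * X * (Dᴴ * D)).trace := by
    rw [hs_trace', Matrix.mul_assoc Xᴴ, Matrix.trace_mul_comm Xᴴ, Matrix.conjTranspose_mul,
      Matrix.conjTranspose_conjTranspose]
    simp only [Matrix.mul_assoc]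
  rw [e1, ← e2, ← e3]
  exact h

lemma cs_pou [DecidableEq m] {ι : Type*} (s : Finset ι) (μ : ι → ℂ) (P : ι → Matrix m m ℂ)
    (hμ : ∀ i ∈ s, ‖μ i‖ ≤ 1) (hP : ∀ i ∈ s, (P i).PosSemidef) (hs1 : ∑ i ∈ s, P i = 1)
    (C : Matrix m n ℂ) (D : Matrix n m ℂ) :
    ‖((∑ i ∈ s, μ i • P i) * (C * D)).trace‖ ≤ (hs C + hs D) / 2 := by
  have e1 : hs C = ∑ i ∈ s, (P i * (C * Cᴴ)).trace.re := by
    rw [← Complex.re_sum, ← Matrix.trace_sum, ← Finset.sum_mul, hs1, Matrix.one_mul, ← hs_trace,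
      Complex.ofReal_re]
  have e2 : hs D = ∑ i ∈ s, (P i * (Dᴴ * D)).trace.re := by
    rw [← Complex.re_sum, ← Matrix.trace_sum, ← Finset.sum_mul, hs1, Matrix.one_mul, ← hs_trace',
      Complex.ofReal_re]
  rw [e1, e2, ← Finset.sum_add_distrib, Finset.sum_div, Finset.sum_mul, Matrix.trace_sum]
  refine (norm_sum_le _ _).trans (Finset.sum_le_sum fun i hi => ?_)
  refine le_trans ?_ (cs_psd (hP i hi) C D)
  rw [Matrix.smul_mul, Matrix.trace_smul, smul_eq_mul, norm_mul]
  exact mul_le_of_le_one_left (norm_nonneg _) (hμ i hi)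

open scoped Matrix.Norms.L2Operator in
lemma unitary_decomp [DecidableEq m] (W : Matrix m m ℂ) (hW : W * Wᴴ = 1) :
    ∃ (s : Finset ℂ) (P : ℂ → Matrix m m ℂ), (∀ i ∈ s, ‖i‖ ≤ 1) ∧
      (∀ i ∈ s, (P i).PosSemidef) ∧ ∑ i ∈ s, P i = 1 ∧ W = ∑ i ∈ s, i • P i := by
  classical
  rcases isEmpty_or_nonempty m with hm | hm
  · exact ⟨∅, 0, by simp, by simp, Subsingleton.elim _ _, Subsingleton.elim _ _⟩
  have hW' : Wᴴ * W = 1 := mul_eq_one_comm.mp hW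
  have hU : W ∈ unitary (Matrix m m ℂ) := ⟨hW', hW⟩
  have hN : IsStarNormal W := ⟨by rw [commute_iff_eq]; exact hW'.trans hW.symm⟩
  have hfin : (spectrum ℂ W).Finite := W.finite_spectrum
  have hc : ∀ f : ℂ → ℂ, ContinuousOn f (spectrum ℂ W) := fun f => hfin.continuousOn f
  refine ⟨hfin.toFinset, fun i => cfc (fun x => if x = i then (1 : ℂ) else 0) W, ?_, ?_, ?_, ?_⟩
  · intro i hi
    have := spectrum.norm_eq_one_of_unitary hU (hfin.mem_toFinset.mp hi)
    exact this.le
  · intro i hi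
    have e : cfc (fun x => if x = i then (1 : ℂ) else 0) W =
        (cfc (fun x => if x = i then (1 : ℂ) else 0) W)ᴴ *
          cfc (fun x => if x = i then (1 : ℂ) else 0) W := by
      rw [← Matrix.star_eq_conjTranspose, ← cfc_star, ← cfc_mul _ _ W (hc _) (hc _)]
      congr 1
      ext x
      split_ifs <;> simp
    beta_reduce
    rw [e]
    exact Matrix.posSemidef_conjTranspose_mul_self _
  · rw [← cfc_sum _ _ _ (fun i _ => hc _), ← cfc_one ℂ W]
    apply cfc_congr
    intro x hx
    simp [Finset.sum_apply, hx]
  · have : ∀ i, i • cfc (fun x => if x = i then (1 : ℂ) else 0) W =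
        cfc (fun x => i • if x = i then (1 : ℂ) else 0) W := fun i => (cfc_smul _ _ _ (hc _)).symm
    simp only [this]
    rw [← cfc_sum _ _ _ (fun i _ => hc _)]
    conv_lhs => rw [← cfc_id ℂ W]
    apply cfc_congr
    intro x hx
    simp [Finset.sum_apply, hx]

end cs

section adjoint

variable {m n : Type*} [Fintype m] [Fintype n] [DecidableEq m] [DecidableEq n]

/-- Trace-adjoint of a linear map between matrix spaces. -/
noncomputable def adj (Ψ : Matrix n n ℂ →ₗ[ℂ] Matrix m m ℂ) :
    Matrix m m ℂ →ₗ[ℂ] Matrix n n ℂ where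
  toFun a := Matrix.of fun i j => (a * Ψ (Matrix.single j i 1)).trace
  map_add' a b := by
    ext i j
    simp [Matrix.add_mul, Matrix.trace_add]
  map_smul' c a := by
    ext i j
    simp [Matrix.trace_smul]

lemma adj_trace (Ψ : Matrix n n ℂ →ₗ[ℂ] Matrix m m ℂ) (a : Matrix m m ℂ) (X : Matrix n n ℂ) :
    (adj Ψ a * X).trace = (a * Ψ X).trace := by
  conv_rhs => rw [Matrix.matrix_eq_sum_single X]
  simp only [map_sum, Finset.mul_sum, Matrix.trace_sum]
  rw [Finset.sum_comm]
  simp only [Matrix.trace, Matrix.diag_apply, Matrix.mul_apply (M := adj Ψ a)]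
  refine Finset.sum_congr rfl fun k _ => ?_
  refine Finset.sum_congr rfl fun l _ => ?_
  have : Matrix.single l k (X l k) = X l k • Matrix.single l k (1 : ℂ) := by
    rw [Matrix.smul_single, smul_eq_mul, mul_one]
  rw [this, map_smul, Matrix.mul_smul]
  change (a * Ψ (Matrix.single l k 1)).trace * _ = _
  simp only [Matrix.smul_apply, smul_eq_mul, ← Finset.mul_sum]
  rw [mul_comm]
  rfl

lemma exists_sqrt {P : Matrix m m ℂ} (hP : P.PosSemidef) : ∃ X : Matrix m m ℂ, P = Xᴴ * X := by
  open scoped MatrixOrder in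
  obtain ⟨X, hX⟩ := CStarAlgebra.nonneg_iff_eq_star_mul_self.mp hP.nonneg
  exact ⟨X, hX⟩

lemma trace_psd_mul {a b : Matrix m m ℂ} (ha : a.PosSemidef) (hb : b.PosSemidef) :
    0 ≤ (a * b).trace := by
  obtain ⟨X, rfl⟩ := exists_sqrt ha
  rw [Matrix.mul_assoc, Matrix.trace_mul_comm]
  exact (hb.mul_mul_conjTranspose_same X).trace_nonneg

lemma trace_pd_mul {a b : Matrix m m ℂ} (ha : a.PosDef) (hb : b.PosSemidef) (h0 : b ≠ 0) :
    0 < (a * b).trace := by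
  refine lt_of_le_of_ne (trace_psd_mul ha.posSemidef hb) fun h => h0 ?_
  obtain ⟨X, hX⟩ := exists_sqrt ha.posSemidef
  have hXu : IsUnit X := by
    have : IsUnit (Xᴴ * X) := hX ▸ ha.isUnit
    rw [Matrix.isUnit_iff_isUnit_det, Matrix.det_mul] at this
    rw [Matrix.isUnit_iff_isUnit_det]
    exact isUnit_of_mul_isUnit_right this
  have h2 : (X * b * Xᴴ).trace = 0 := by
    rw [h, hX, Matrix.mul_assoc Xᴴ, Matrix.trace_mul_comm Xᴴ]
  have h3 := ((hb.mul_mul_conjTranspose_same X).trace_eq_zero_iff).mp h2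
  have hXs : IsUnit Xᴴ := by
    rw [← Matrix.star_eq_conjTranspose]; exact hXu.star
  have h4 := (hXs.mul_left_eq_zero).mp h3
  exact (hXu.mul_right_eq_zero).mp h4

lemma quad_trace (M : Matrix n n ℂ) (x : n → ℂ) :
    star x ⬝ᵥ (M *ᵥ x) = (M * Matrix.vecMulVec x (star x)).trace := by
  rw [Matrix.mul_vecMulVec, Matrix.trace_vecMulVec, dotProduct_comm]

lemma psd_of_quad (M : Matrix n n ℂ) (h : ∀ x : n → ℂ, 0 ≤ star x ⬝ᵥ (M *ᵥ x)) :
    M.PosSemidef := by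
  have := (Matrix.isPositive_toEuclideanLin_iff (A := M)).mp ?_
  · exact this
  rw [LinearMap.isPositive_iff_complex]
  intro x
  have hx := h x.ofLp
  have e : inner ℂ (Matrix.toEuclideanLin M x) x = star (star x.ofLp ⬝ᵥ (M *ᵥ x.ofLp)) := by
    rw [EuclideanSpace.inner_eq_star_dotProduct]
    have e1 : (Matrix.toEuclideanLin M x).ofLp = M *ᵥ x.ofLp := rfl
    rw [e1, Matrix.star_dotProduct, star_star, dotProduct_comm]
  rw [Complex.nonneg_iff] at hx
  rw [e]
  constructor
  · apply Complex.ext <;> simp [← hx.2]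
  · simpa using hx.1

variable {Ψ : Matrix n n ℂ →ₗ[ℂ] Matrix m m ℂ}

lemma adj_psd (hpos : ∀ A : Matrix n n ℂ, A.PosSemidef → (Ψ A).PosSemidef)
    {a : Matrix m m ℂ} (ha : a.PosSemidef) : (adj Ψ a).PosSemidef := by
  refine psd_of_quad _ fun x => ?_
  rw [quad_trace, adj_trace]
  exact trace_psd_mul ha (hpos _ (Matrix.posSemidef_vecMulVec_self_star x))

lemma adj_posDef (hpos : ∀ A : Matrix n n ℂ, A.PosSemidef → (Ψ A).PosSemidef)
    (htr : ∀ A : Matrix n n ℂ, (Ψ A).trace = A.trace)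
    {a : Matrix m m ℂ} (ha : a.PosDef) : (adj Ψ a).PosDef := by
  refine Matrix.PosDef.of_dotProduct_mulVec_pos (adj_psd hpos ha.posSemidef).1 fun {x} hx => ?_
  rw [quad_trace, adj_trace]
  refine trace_pd_mul ha (hpos _ (Matrix.posSemidef_vecMulVec_self_star x)) fun h => hx ?_
  have := htr (Matrix.vecMulVec x (star x))
  rw [h, Matrix.trace_zero, Matrix.trace_vecMulVec] at this
  exact dotProduct_self_star_eq_zero.mp this.symm

lemma adj_one (htr : ∀ A : Matrix n n ℂ, (Ψ A).trace = A.trace) : adj Ψ 1 = 1 := by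
  rw [Matrix.ext_iff_trace_mul_right]
  intro X
  rw [adj_trace, Matrix.one_mul, Matrix.one_mul, htr]

lemma cp_decomp {a : Matrix m m ℂ} (ha : a.IsHermitian) : ∃ P : m → Matrix m m ℂ,
    (∀ i, (P i).PosSemidef) ∧
    ∀ w, cp a w = ∑ i, Complex.exp (w * (Real.log (ha.eigenvalues i) : ℝ)) • P i := by
  refine ⟨fun i => (ha.eigenvectorUnitary : Matrix m m ℂ) * Matrix.single i i 1 *
    star (ha.eigenvectorUnitary : Matrix m m ℂ), fun i => ?_, fun w => ?_⟩
  · refine Matrix.PosSemidef.mul_mul_conjTranspose_same ?_ _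
    have : Matrix.single i i (1 : ℂ) = Matrix.diagonal (Pi.single i 1) := by
      rw [Matrix.diagonal_single]
    rw [this]
    apply Matrix.PosSemidef.diagonal
    intro j
    by_cases h : j = i
    · subst h; simp
    · simp [h]
  · rw [cp_eq ha]
    have : ∀ d : m → ℂ, Matrix.diagonal d = ∑ i, d i • Matrix.single i i (1 : ℂ) := by
      intro d
      ext i j
      rw [Matrix.sum_apply]
      simp only [Matrix.smul_apply, Matrix.single_apply, smul_eq_mul, Matrix.diagonal_apply]
      by_cases h : i = j
      · subst h; simp
      · rw [if_neg h]
        symm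
        apply Finset.sum_eq_zero
        intro k _
        rw [if_neg (fun hk => h (hk.1.symm.trans hk.2)), mul_zero]
    rw [this, Finset.mul_sum, Finset.sum_mul]
    simp only [Matrix.mul_smul, Matrix.smul_mul]

lemma choi (hpos : ∀ A : Matrix n n ℂ, A.PosSemidef → (Ψ A).PosSemidef)
    (htr : ∀ A : Matrix n n ℂ, (Ψ A).trace = A.trace)
    {a : Matrix m m ℂ} (ha : a.PosDef) :
    (adj Ψ (cp a (-1)) - cp (adj Ψ a) (-1)).PosSemidef := by
  obtain ⟨P, hP, hdec⟩ := cp_decomp ha.1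
  have hg := adj_posDef hpos htr ha
  set Y := cp (adj Ψ a) (-1) with hY
  have hYh : Yᴴ = Y := by
    have := cp_herm hg.1 (-1)
    push_cast at this
    exact this
  have hYg : Y * adj Ψ a = 1 := by
    have h := cp_mul hg.1 (-1) 1
    rw [cp_one hg] at h
    rw [hY, h, neg_add_cancel, cp_zero hg.1]
  set l := ha.1.eigenvalues
  have hl : ∀ i, 0 < l i := ha.eigenvalues_pos
  have e1 : adj Ψ (cp a (-1)) = ∑ i, ((l i : ℂ)⁻¹) • adj Ψ (P i) := by
    rw [hdec, map_sum]
    refine Finset.sum_congr rfl fun i _ => ?_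
    rw [map_smul]
    congr 1
    have := exp_log_rpow (hl i) (-1)
    rw [Real.rpow_neg_one] at this
    push_cast at this
    exact this
  have e2 : adj Ψ a = ∑ i, (l i : ℂ) • adj Ψ (P i) := by
    conv_lhs => rw [← cp_one ha, hdec, map_sum]
    refine Finset.sum_congr rfl fun i _ => ?_
    rw [map_smul]
    congr 1
    have := exp_log_rpow (hl i) 1
    rw [Real.rpow_one] at this
    push_cast at this
    exact this
  have e0 : ∑ i, adj Ψ (P i) = 1 := by
    have := hdec 0
    rw [cp_zero ha.1] at this
    rw [← adj_one htr, this, map_sum]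
    simp
  have key : adj Ψ (cp a (-1)) - Y = ∑ i, ((l i : ℂ)⁻¹) •
      ((1 - (l i : ℂ) • Y)ᴴ * adj Ψ (P i) * (1 - (l i : ℂ) • Y)) := by
    have e3 : ∀ i, ((l i : ℂ)⁻¹) •
      ((1 - (l i : ℂ) • Y)ᴴ * adj Ψ (P i) * (1 - (l i : ℂ) • Y)) =
      (l i : ℂ)⁻¹ • adj Ψ (P i) - Y * adj Ψ (P i) - adj Ψ (P i) * Y +
        Y * ((l i : ℂ) • adj Ψ (P i)) * Y := by
      intro i
      have hne : (l i : ℂ) ≠ 0 := by exact_mod_cast (hl i).ne'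
      have : (1 - (l i : ℂ) • Y)ᴴ = 1 - (l i : ℂ) • Y := by
        rw [Matrix.conjTranspose_sub, Matrix.conjTranspose_smul, hYh]; simp
      rw [this]
      simp only [sub_mul, mul_sub, one_mul, mul_one, Matrix.smul_mul, Matrix.mul_smul, smul_sub,
        smul_smul, inv_mul_cancel₀ hne, one_smul, inv_mul_cancel_left₀ hne]
      abel
    simp only [e3, Finset.sum_add_distrib, Finset.sum_sub_distrib, ← Finset.mul_sum,
      ← Finset.sum_mul, ← e2, e0, ← e1, hYg]
    simp
  rw [key]
  refine Matrix.posSemidef_sum _ fun i _ => ?_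
  have h1 := (adj_psd hpos (hP i)).conjTranspose_mul_mul_same (1 - (l i : ℂ) • Y)
  have h2 : (0 : ℂ) ≤ (l i : ℂ)⁻¹ := by
    rw [← Complex.ofReal_inv]
    exact_mod_cast (inv_pos.mpr (hl i)).le
  exact h1.smul h2

end adjoint

section key

variable {m n : Type*} [Fintype m] [Fintype n] [DecidableEq m] [DecidableEq n]

lemma cp_unit1 {A : Matrix n n ℂ} (hA : A.IsHermitian) (t : ℝ) :
    cp A ((t : ℂ) * I) * (cp A ((t : ℂ) * I))ᴴ = 1 := by
  rw [cp_star hA, cp_mul hA]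
  simp [cp_zero hA]

lemma cp_unit2 {A : Matrix n n ℂ} (hA : A.IsHermitian) (t : ℝ) :
    (cp A ((t : ℂ) * I))ᴴ * cp A ((t : ℂ) * I) = 1 := by
  rw [cp_star hA, cp_mul hA]
  simp [cp_zero hA]

lemma unit_mul {U V : Matrix n n ℂ} (hU : U * Uᴴ = 1) (hV : V * Vᴴ = 1) :
    (U * V) * (U * V)ᴴ = 1 := by
  rw [Matrix.conjTranspose_mul, Matrix.mul_assoc, ← Matrix.mul_assoc V, hV, Matrix.one_mul, hU]

lemma hs_left {V G : Matrix n n ℂ} (hV : V * Vᴴ = 1) : hs (V * G) = hs G := by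
  have hV' : Vᴴ * V = 1 := mul_eq_one_comm.mp hV
  have : ((hs (V * G) : ℝ) : ℂ) = ((hs G : ℝ) : ℂ) := by
    rw [hs_trace', hs_trace', Matrix.conjTranspose_mul, Matrix.mul_assoc, ← Matrix.mul_assoc Vᴴ,
      hV', Matrix.one_mul]
  exact_mod_cast this

lemma hs_right {V G : Matrix n n ℂ} (hV : V * Vᴴ = 1) : hs (G * V) = hs G := by
  have : ((hs (G * V) : ℝ) : ℂ) = ((hs G : ℝ) : ℂ) := by
    rw [hs_trace, hs_trace, Matrix.conjTranspose_mul, Matrix.mul_assoc, ← Matrix.mul_assoc V,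
      hV, Matrix.one_mul]
  exact_mod_cast this

lemma hs_cp {c : Matrix n n ℂ} (hc : c.PosDef) (p : ℝ) :
    hs (cp c ((p / 2 : ℝ) : ℂ)) = tp c p := by
  have : ((hs (cp c ((p / 2 : ℝ) : ℂ)) : ℝ) : ℂ) = (tp c p : ℂ) := by
    rw [hs_trace, cp_herm hc.1, cp_mul hc.1, ← cp_trace_real hc]
    congr 2
    push_cast
    ring
  exact_mod_cast this

lemma interp_conclude {T B θ : ℝ} (hT : 0 ≤ T) (hB : 0 ≤ B) (hθ : 0 < θ)
    (h : T ≤ T ^ (1 - θ) * B ^ θ) : T ≤ B := by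
  rcases hT.eq_or_lt with h0 | h0
  · rw [← h0]; exact hB
  have h1 : T ^ (1 - θ) * T ^ θ = T := by
    rw [← Real.rpow_add h0]; simp
  have h2 : T ^ (1 - θ) * T ^ θ ≤ T ^ (1 - θ) * B ^ θ := by rw [h1]; exact h
  have h3 := le_of_mul_le_mul_left h2 (Real.rpow_pos_of_pos h0 _)
  exact (Real.rpow_le_rpow_iff hT hB hθ).mp h3

lemma contr {Ψ : Matrix n n ℂ →ₗ[ℂ] Matrix m m ℂ}
    (hpos : ∀ A : Matrix n n ℂ, A.PosSemidef → (Ψ A).PosSemidef)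
    (htr : ∀ A : Matrix n n ℂ, (Ψ A).trace = A.trace)
    {ρ : Matrix n n ℂ} (hρ : ρ.PosDef) (hs' : (Ψ ρ).PosDef)
    {a : Matrix m m ℂ} (ha : a.PosDef) {p : ℝ} (hp : 1 ≤ p) :
    tp (cp ρ ((1 / (2 * p) : ℝ) : ℂ) * adj Ψ a * cp ρ ((1 / (2 * p) : ℝ) : ℂ)) p ≤
    tp (cp (Ψ ρ) ((1 / (2 * p) : ℝ) : ℂ) * a * cp (Ψ ρ) ((1 / (2 * p) : ℝ) : ℂ)) p := by
  have hp0 : 0 < p := by linarith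
  have hc : (cp ρ ((1 / (2 * p) : ℝ) : ℂ) * adj Ψ a * cp ρ ((1 / (2 * p) : ℝ) : ℂ)).PosDef :=
    sandwich_posDef hρ.1 (adj_posDef hpos htr ha) _
  have hb : (cp (Ψ ρ) ((1 / (2 * p) : ℝ) : ℂ) * a * cp (Ψ ρ) ((1 / (2 * p) : ℝ) : ℂ)).PosDef :=
    sandwich_posDef hs'.1 ha _
  set s := Ψ ρ with hsdef
  set c := cp ρ ((1 / (2 * p) : ℝ) : ℂ) * adj Ψ a * cp ρ ((1 / (2 * p) : ℝ) : ℂ) with hcdef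
  set b := cp s ((1 / (2 * p) : ℝ) : ℂ) * a * cp s ((1 / (2 * p) : ℝ) : ℂ) with hbdef
  set F : ℂ → ℂ := fun w =>
    ((cp s (((-(1 / 2) : ℝ) : ℂ) * w + ((0 : ℝ) : ℂ)) * cp b ((p : ℂ) * w + ((0 : ℝ) : ℂ)) *
      cp s (((-(1 / 2) : ℝ) : ℂ) * w + ((0 : ℝ) : ℂ))) *
      Ψ (cp ρ (((1 / 2 : ℝ) : ℂ) * w + ((0 : ℝ) : ℂ)) * cp c (((-p : ℝ) : ℂ) * w + (p : ℂ)) *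
        cp ρ (((1 / 2 : ℝ) : ℂ) * w + ((0 : ℝ) : ℂ)))).trace with hF
  have hGood : Good F := by
    refine GoodM.trace (GoodM.mul (((GoodM.cp hs'.1 _ _).mul (GoodM.cp hb.1 _ _)).mul
      (GoodM.cp hs'.1 _ _)) (GoodM.map (((GoodM.cp hρ.1 _ _).mul (GoodM.cp hc.1 _ _)).mul
      (GoodM.cp hρ.1 _ _)) Ψ))
  have h0 : ∀ t : ℝ, ‖F (t * I)‖ ≤ tp c p := by
    intro t
    set S := cp s (((-(t / 2) : ℝ) : ℂ) * I) with hS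
    set Bu := cp b (((p * t : ℝ) : ℂ) * I) with hBu
    set R := cp ρ (((t / 2 : ℝ) : ℂ) * I) with hR
    set Cu := cp c (((-(p * t) : ℝ) : ℂ) * I) with hCu
    have hSu : S * Sᴴ = 1 := cp_unit1 hs'.1 _
    have hBuu : Bu * Buᴴ = 1 := cp_unit1 hb.1 _
    have hRu : R * Rᴴ = 1 := cp_unit1 hρ.1 _
    have hCuu : Cu * Cuᴴ = 1 := cp_unit1 hc.1 _
    have hu : (S * Bu * S) * (S * Bu * S)ᴴ = 1 := unit_mul (unit_mul hSu hBuu) hSu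
    obtain ⟨k, P, hk, hP, hP1, hPu⟩ := unitary_decomp _ hu
    have e : F (t * I) = ((∑ i ∈ k, i • adj Ψ (P i)) *
        ((R * cp c ((p / 2 : ℝ) : ℂ)) * (cp c ((p / 2 : ℝ) : ℂ) * (Cu * R)))).trace := by
      have e1 : ∑ i ∈ k, i • adj Ψ (P i) = adj Ψ (S * Bu * S) := by
        rw [hPu, map_sum]; simp only [map_smul]
      rw [e1, adj_trace, hF]
      have a1 : ((-(1 / 2) : ℝ) : ℂ) * (t * I) + ((0 : ℝ) : ℂ) = ((-(t / 2) : ℝ) : ℂ) * I := by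
        push_cast; ring
      have a2 : (p : ℂ) * (t * I) + ((0 : ℝ) : ℂ) = ((p * t : ℝ) : ℂ) * I := by
        push_cast; ring
      have a3 : ((1 / 2 : ℝ) : ℂ) * (t * I) + ((0 : ℝ) : ℂ) = ((t / 2 : ℝ) : ℂ) * I := by
        push_cast; ring
      have a4 : ((-p : ℝ) : ℂ) * (t * I) + (p : ℂ) =
          ((p / 2 : ℝ) : ℂ) + ((p / 2 : ℝ) : ℂ) + ((-(p * t) : ℝ) : ℂ) * I := by
        push_cast; ring
      beta_reduce
      rw [a1, a2, a3, a4, ← cp_mul hc.1, ← cp_mul hc.1]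
      simp only [Matrix.mul_assoc]
      rfl
    rw [e]
    refine (cs_pou k (fun i => i) (fun i => adj Ψ (P i)) hk (fun i hi => adj_psd hpos (hP i hi))
      ?_ _ _).trans ?_
    · rw [← map_sum, hP1, adj_one htr]
    · rw [hs_left hRu, hs_right (unit_mul hCuu hRu), hs_cp hc]
      linarith
  have h1 : ∀ t : ℝ, ‖F (1 + t * I)‖ ≤ tp b p := by
    intro t
    set S := cp s (((-(t / 2) : ℝ) : ℂ) * I) with hS
    set Bu := cp b (((p * t : ℝ) : ℂ) * I) with hBu
    set R := cp ρ (((t / 2 : ℝ) : ℂ) * I) with hR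
    set Cu := cp c (((-(p * t) : ℝ) : ℂ) * I) with hCu
    have hSu : S * Sᴴ = 1 := cp_unit1 hs'.1 _
    have hBuu : Bu * Buᴴ = 1 := cp_unit1 hb.1 _
    have hRu : R * Rᴴ = 1 := cp_unit1 hρ.1 _
    have hCuu : Cu * Cuᴴ = 1 := cp_unit1 hc.1 _
    have hu : (R * Cu * R) * (R * Cu * R)ᴴ = 1 := unit_mul (unit_mul hRu hCuu) hRu
    obtain ⟨k, P, hk, hP, hP1, hPu⟩ := unitary_decomp _ hu
    set sh := cp s ((-(1 / 2) : ℝ) : ℂ) with hsh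
    set rh := cp ρ ((1 / 2 : ℝ) : ℂ) with hrh
    have e : F (1 + t * I) = ((∑ i ∈ k, i • (sh * Ψ (rh * P i * rh) * sh)) *
        ((S * cp b ((p / 2 : ℝ) : ℂ)) * (cp b ((p / 2 : ℝ) : ℂ) * (Bu * S)))).trace := by
      have e1 : ∑ i ∈ k, i • (sh * Ψ (rh * P i * rh) * sh) =
          sh * Ψ (rh * (R * Cu * R) * rh) * sh := by
        rw [hPu]
        simp only [Finset.mul_sum, Finset.sum_mul, map_sum, Matrix.mul_smul, Matrix.smul_mul,
          map_smul]
      rw [e1, hF]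
      have a1 : ((-(1 / 2) : ℝ) : ℂ) * (1 + t * I) + ((0 : ℝ) : ℂ) =
          ((-(1 / 2) : ℝ) : ℂ) + ((-(t / 2) : ℝ) : ℂ) * I := by
        push_cast; ring
      have a2 : (p : ℂ) * (1 + t * I) + ((0 : ℝ) : ℂ) =
          ((p / 2 : ℝ) : ℂ) + ((p / 2 : ℝ) : ℂ) + ((p * t : ℝ) : ℂ) * I := by
        push_cast; ring
      have a3 : ((1 / 2 : ℝ) : ℂ) * (1 + t * I) + ((0 : ℝ) : ℂ) =
          ((1 / 2 : ℝ) : ℂ) + ((t / 2 : ℝ) : ℂ) * I := by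
        push_cast; ring
      have a4 : ((-p : ℝ) : ℂ) * (1 + t * I) + (p : ℂ) = ((-(p * t) : ℝ) : ℂ) * I := by
        push_cast; ring
      have c1 : sh * S = S * sh := by
        rw [hsh, hS, cp_mul hs'.1, cp_mul hs'.1, add_comm]
      have c2 : rh * R = R * rh := by
        rw [hrh, hR, cp_mul hρ.1, cp_mul hρ.1, add_comm]
      beta_reduce
      rw [a1, a2, a3, a4, ← cp_mul hb.1, ← cp_mul hb.1, ← cp_mul hs'.1, ← cp_mul hρ.1]
      change ((sh * S * (cp b ((p / 2 : ℝ) : ℂ) * cp b ((p / 2 : ℝ) : ℂ) * Bu) * (sh * S)) *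
        Ψ ((rh * R) * Cu * (rh * R))).trace = _
      have d1 : (rh * R) * Cu * (rh * R) = rh * (R * Cu * R) * rh := by
        nth_rewrite 2 [c2]
        simp only [Matrix.mul_assoc]
      have d2 : sh * S * (cp b ((p / 2 : ℝ) : ℂ) * cp b ((p / 2 : ℝ) : ℂ) * Bu) * (sh * S) =
          sh * ((S * cp b ((p / 2 : ℝ) : ℂ)) * (cp b ((p / 2 : ℝ) : ℂ) * (Bu * S)) * sh) := by
        nth_rewrite 2 [c1]
        simp only [Matrix.mul_assoc]
      rw [d1, d2, Matrix.mul_assoc, Matrix.trace_mul_comm, Matrix.mul_assoc, Matrix.mul_assoc,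
        Matrix.trace_mul_comm]
      simp only [Matrix.mul_assoc]
    rw [e]
    have hrhh : rhᴴ = rh := cp_herm hρ.1 _
    have hshh : shᴴ = sh := cp_herm hs'.1 _
    refine (cs_pou k (fun i => i) (fun i => sh * Ψ (rh * P i * rh) * sh) hk (fun i hi => ?_)
      ?_ _ _).trans ?_
    · have g1 := (hP i hi).mul_mul_conjTranspose_same rh
      rw [hrhh] at g1
      have g2 := (hpos _ g1).mul_mul_conjTranspose_same sh
      rwa [hshh] at g2
    · rw [← Finset.sum_mul, ← Finset.mul_sum, ← map_sum, ← Finset.sum_mul, ← Finset.mul_sum, hP1,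
        Matrix.mul_one]
      have g1 : rh * rh = ρ := by
        rw [hrh, cp_mul hρ.1]
        conv_rhs => rw [← cp_one hρ]
        congr 1
        push_cast; ring
      rw [g1, ← hsdef]
      have g2 : sh * s = cp s ((1 / 2 : ℝ) : ℂ) := by
        have := cp_mul hs'.1 ((-(1 / 2) : ℝ) : ℂ) 1
        rw [cp_one hs'] at this
        rw [hsh, this]
        congr 1
        push_cast; ring
      rw [g2, hsh, cp_mul hs'.1, ← cp_zero hs'.1]
      congr 1
      push_cast; ring
    · rw [hs_left hSu, hs_right (unit_mul hBuu hSu), hs_cp hb]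
      linarith
  have hθ0 : 0 < 1 / p := by positivity
  have hθ1 : 1 / p ≤ 1 := by rw [div_le_one hp0]; exact hp
  have h3 := hGood.threeLines h0 h1 hθ0.le hθ1
  have hval : F ((1 / p : ℝ) : ℂ) = (tp c p : ℂ) := by
    have hpc : (p : ℂ) ≠ 0 := by exact_mod_cast hp0.ne'
    rw [hF]
    have a1 : ((-(1 / 2) : ℝ) : ℂ) * ((1 / p : ℝ) : ℂ) + ((0 : ℝ) : ℂ) =
        -((1 / (2 * p) : ℝ) : ℂ) := by
      push_cast; field_simp; ring
    have a2 : (p : ℂ) * ((1 / p : ℝ) : ℂ) + ((0 : ℝ) : ℂ) = 1 := by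
      push_cast; field_simp; ring
    have a3 : ((1 / 2 : ℝ) : ℂ) * ((1 / p : ℝ) : ℂ) + ((0 : ℝ) : ℂ) =
        ((1 / (2 * p) : ℝ) : ℂ) := by
      push_cast; field_simp; ring
    have a4 : ((-p : ℝ) : ℂ) * ((1 / p : ℝ) : ℂ) + (p : ℂ) = (p : ℂ) - 1 := by
      push_cast; field_simp; ring
    beta_reduce
    rw [a1, a2, a3, a4, cp_one hb]
    have g1 : cp s (-((1 / (2 * p) : ℝ) : ℂ)) * b * cp s (-((1 / (2 * p) : ℝ) : ℂ)) = a := by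
      have r1 := cp_mul hs'.1 (-((1 / (2 * p) : ℝ) : ℂ)) ((1 / (2 * p) : ℝ) : ℂ)
      have r2 := cp_mul hs'.1 ((1 / (2 * p) : ℝ) : ℂ) (-((1 / (2 * p) : ℝ) : ℂ))
      rw [neg_add_cancel, cp_zero hs'.1] at r1
      rw [add_neg_cancel, cp_zero hs'.1] at r2
      rw [hbdef, ← Matrix.mul_assoc, ← Matrix.mul_assoc, r1, Matrix.one_mul, Matrix.mul_assoc, r2,
        Matrix.mul_one]
    rw [g1, ← adj_trace]
    have g2 : ∀ X : Matrix n n ℂ, (adj Ψ a * (cp ρ ((1 / (2 * p) : ℝ) : ℂ) * X *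
        cp ρ ((1 / (2 * p) : ℝ) : ℂ))).trace = (c * X).trace := by
      intro X
      rw [hcdef, ← Matrix.mul_assoc, Matrix.trace_mul_comm]
      simp only [Matrix.mul_assoc]
    rw [g2, ← cp_trace_real hc]
    have := cp_mul hc.1 1 ((p : ℂ) - 1)
    rw [cp_one hc] at this
    rw [this]
    congr 2
    ring
  rw [hval] at h3
  rw [Complex.norm_real, Real.norm_of_nonneg (tp_nonneg hc p)] at h3
  exact interp_conclude (tp_nonneg hc p) (tp_nonneg hb p) hθ0 h3

lemma alt {M N : Matrix n n ℂ} (hM : M.PosDef) (hN : N.PosDef) {z : ℝ} (hz : 1 ≤ z) :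
    tp (cp N ((1 / 2 : ℝ) : ℂ) * M * cp N ((1 / 2 : ℝ) : ℂ)) z ≤
      (cp M (z : ℂ) * cp N (z : ℂ)).trace.re := by
  have hz0 : 0 < z := by linarith
  have hc : (cp N ((1 / 2 : ℝ) : ℂ) * M * cp N ((1 / 2 : ℝ) : ℂ)).PosDef :=
    sandwich_posDef hN.1 hM _
  set c := cp N ((1 / 2 : ℝ) : ℂ) * M * cp N ((1 / 2 : ℝ) : ℂ) with hcdef
  set F : ℂ → ℂ := fun w =>
    (cp N (((z / 2 : ℝ) : ℂ) * w + ((0 : ℝ) : ℂ)) * cp M ((z : ℂ) * w + ((0 : ℝ) : ℂ)) *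
      cp N (((z / 2 : ℝ) : ℂ) * w + ((0 : ℝ) : ℂ)) *
      cp c (((-z : ℝ) : ℂ) * w + (z : ℂ))).trace with hF
  have hGood : Good F :=
    GoodM.trace ((((GoodM.cp hN.1 _ _).mul (GoodM.cp hM.1 _ _)).mul
      (GoodM.cp hN.1 _ _)).mul (GoodM.cp hc.1 _ _))
  set G := cp N ((z / 2 : ℝ) : ℂ) * cp M ((z / 2 : ℝ) : ℂ) with hG
  set G' := cp M ((z / 2 : ℝ) : ℂ) * cp N ((z / 2 : ℝ) : ℂ) with hG'
  have hMM : cp M ((z / 2 : ℝ) : ℂ) * cp M ((z / 2 : ℝ) : ℂ) = cp M (z : ℂ) := by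
    rw [cp_mul hM.1]; congr 1; push_cast; ring
  have hNN : cp N ((z / 2 : ℝ) : ℂ) * cp N ((z / 2 : ℝ) : ℂ) = cp N (z : ℂ) := by
    rw [cp_mul hN.1]; congr 1; push_cast; ring
  have hGs : Gᴴ = G' := by
    rw [hG, Matrix.conjTranspose_mul, cp_herm hN.1, cp_herm hM.1]
  have hGs' : G'ᴴ = G := by rw [← hGs, Matrix.conjTranspose_conjTranspose]
  have htrG : ((hs G : ℝ) : ℂ) = (cp M (z : ℂ) * cp N (z : ℂ)).trace := by
    rw [hs_trace', hGs, hG', hG, Matrix.mul_assoc, ← Matrix.mul_assoc (cp N _), hNN,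
      Matrix.trace_mul_comm, Matrix.mul_assoc, hMM, Matrix.trace_mul_comm]
  have htrG' : hs G' = hs G := by
    have : ((hs G' : ℝ) : ℂ) = ((hs G : ℝ) : ℂ) := by rw [hs_trace, hs_trace', hGs, hGs']
    exact_mod_cast this
  have hre : (cp M (z : ℂ) * cp N (z : ℂ)).trace.re = hs G := by
    rw [← htrG, Complex.ofReal_re]
  rw [hre]
  have hsnn : 0 ≤ hs G := Finset.sum_nonneg fun i _ => Finset.sum_nonneg fun j _ => sq_nonneg _
  have key : ∀ t : ℝ, ‖F (t * I)‖ ≤ tp c z ∧ ‖F (1 + t * I)‖ ≤ hs G := by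
    intro t
    set Nu := cp N (((z / 2 * t : ℝ) : ℂ) * I) with hNu
    set Mu := cp M (((z * t : ℝ) : ℂ) * I) with hMu
    set Cu := cp c (((-(z * t) : ℝ) : ℂ) * I) with hCu
    have hNuu : Nu * Nuᴴ = 1 := cp_unit1 hN.1 _
    have hMuu : Mu * Muᴴ = 1 := cp_unit1 hM.1 _
    have hCuu : Cu * Cuᴴ = 1 := cp_unit1 hc.1 _
    constructor
    · have e : F (t * I) = (((Nu * Mu * Nu) * cp c ((z / 2 : ℝ) : ℂ)) *
          (cp c ((z / 2 : ℝ) : ℂ) * Cu)).trace := by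
        have a1 : ((z / 2 : ℝ) : ℂ) * (t * I) + ((0 : ℝ) : ℂ) = ((z / 2 * t : ℝ) : ℂ) * I := by
          push_cast; ring
        have a2 : (z : ℂ) * (t * I) + ((0 : ℝ) : ℂ) = ((z * t : ℝ) : ℂ) * I := by
          push_cast; ring
        have a4 : ((-z : ℝ) : ℂ) * (t * I) + (z : ℂ) =
            ((z / 2 : ℝ) : ℂ) + ((z / 2 : ℝ) : ℂ) + ((-(z * t) : ℝ) : ℂ) * I := by
          push_cast; ring
        rw [hF]
        beta_reduce
        rw [a1, a2, a4, ← cp_mul hc.1, ← cp_mul hc.1]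
        simp only [Matrix.mul_assoc]
        rfl
      rw [e]
      refine (cs_basic _ _).trans ?_
      rw [hs_left (unit_mul (unit_mul hNuu hMuu) hNuu), hs_right hCuu, hs_cp hc]
      linarith
    · have e : F (1 + t * I) = ((Nu * G) * (Mu * (G' * (Nu * Cu)))).trace := by
        have a1 : ((z / 2 : ℝ) : ℂ) * (1 + t * I) + ((0 : ℝ) : ℂ) =
            ((z / 2 : ℝ) : ℂ) + ((z / 2 * t : ℝ) : ℂ) * I := by
          push_cast; ring
        have a2 : (z : ℂ) * (1 + t * I) + ((0 : ℝ) : ℂ) =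
            ((z / 2 : ℝ) : ℂ) + ((z * t : ℝ) : ℂ) * I + ((z / 2 : ℝ) : ℂ) := by
          push_cast; ring
        have a4 : ((-z : ℝ) : ℂ) * (1 + t * I) + (z : ℂ) = ((-(z * t) : ℝ) : ℂ) * I := by
          push_cast; ring
        have c1 : cp N ((z / 2 : ℝ) : ℂ) * Nu = Nu * cp N ((z / 2 : ℝ) : ℂ) := by
          rw [hNu, cp_mul hN.1, cp_mul hN.1, add_comm]
        rw [hF]
        beta_reduce
        rw [a1, a2, a4, ← cp_mul hN.1, ← cp_mul hM.1, ← cp_mul hM.1]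
        change (cp N ((z / 2 : ℝ) : ℂ) * Nu * _ * _ * _).trace = _
        rw [c1, hG, hG']
        simp only [Matrix.mul_assoc]
        rw [← Matrix.mul_assoc Nu (cp N _) (cp c _), ← c1]
        simp only [Matrix.mul_assoc]
        rfl
      rw [e]
      refine (cs_basic _ _).trans ?_
      rw [hs_left hNuu, hs_left hMuu, hs_right (unit_mul hNuu hCuu), htrG']
      linarith
  have hθ0 : 0 < 1 / z := by positivity
  have hθ1 : 1 / z ≤ 1 := by rw [div_le_one hz0]; exact hz
  have h3 := hGood.threeLines (fun t => (key t).1) (fun t => (key t).2) hθ0.le hθ1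
  have hval : F ((1 / z : ℝ) : ℂ) = (tp c z : ℂ) := by
    have hpc : (z : ℂ) ≠ 0 := by exact_mod_cast hz0.ne'
    rw [hF]
    have a1 : ((z / 2 : ℝ) : ℂ) * ((1 / z : ℝ) : ℂ) + ((0 : ℝ) : ℂ) = ((1 / 2 : ℝ) : ℂ) := by
      push_cast; field_simp; ring
    have a2 : (z : ℂ) * ((1 / z : ℝ) : ℂ) + ((0 : ℝ) : ℂ) = 1 := by
      push_cast; field_simp; ring
    have a4 : ((-z : ℝ) : ℂ) * ((1 / z : ℝ) : ℂ) + (z : ℂ) = (z : ℂ) - 1 := by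
      push_cast; field_simp; ring
    beta_reduce
    rw [a1, a2, a4, cp_one hM, ← hcdef, ← cp_trace_real hc]
    have := cp_mul hc.1 1 ((z : ℂ) - 1)
    rw [cp_one hc] at this
    rw [this]
    congr 2
    ring
  rw [hval] at h3
  rw [Complex.norm_real, Real.norm_of_nonneg (tp_nonneg hc z)] at h3
  exact interp_conclude (tp_nonneg hc z) hsnn hθ0 h3

end key

section final

variable {m n : Type*} [Fintype m] [Fintype n] [DecidableEq m] [DecidableEq n]

lemma cp_mulr {A : Matrix n n ℂ} (hA : A.IsHermitian) {s t r : ℝ} (h : s + t = r) :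
    cp A (s : ℂ) * cp A (t : ℂ) = cp A (r : ℂ) := by
  rw [cp_mul hA, ← h]; push_cast; rfl

lemma cp_oner {A : Matrix n n ℂ} (hA : A.PosDef) : cp A ((1 : ℝ) : ℂ) = A := by
  rw [Complex.ofReal_one, cp_one hA]

lemma cp_inv1 {A : Matrix n n ℂ} (hA : A.IsHermitian) {s t : ℝ} (h : s + t = 0) :
    cp A (s : ℂ) * cp A (t : ℂ) = 1 := by
  rw [cp_mulr hA h, Complex.ofReal_zero, cp_zero hA]

lemma young {a b w₁ w₂ s t s' t' : ℝ} (ha : 0 < a) (hb : 0 < b) (h1 : 0 ≤ w₁) (h2 : 0 ≤ w₂)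
    (h : w₁ + w₂ = 1) (hs : s' = s * w₁) (ht : t' = t * w₂) :
    a ^ s' * b ^ t' ≤ w₁ * a ^ s + w₂ * b ^ t := by
  have := Real.geom_mean_le_arith_mean2_weighted h1 h2 (Real.rpow_nonneg ha.le s)
    (Real.rpow_nonneg hb.le t) h
  rwa [← Real.rpow_mul ha.le, ← Real.rpow_mul hb.le, ← hs, ← ht] at this

lemma hoelder {M N : Matrix n n ℂ} (hM : M.PosDef) (hN : N.PosDef) {α z : ℝ} (h0 : 0 < α)
    (h1 : α < 1) (hz1 : α ≤ z) (hz2 : 1 - α ≤ z) :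
    tp (cp N ((1 / 2 : ℝ) : ℂ) * M * cp N ((1 / 2 : ℝ) : ℂ)) z ≤
      α * tp M (z / α) + (1 - α) * tp N (z / (1 - α)) := by
  have hz0 : 0 < z := by linarith
  have h1' : 0 < 1 - α := by linarith
  rcases le_total 1 z with hz | hz
  · refine (alt hM hN hz).trans ?_
    have := klein hM hN α (1 - α) (-1) (z / α) (z / (1 - α)) z z (fun a b ha hb => by
      have := young (w₁ := α) (w₂ := 1 - α) (s := z / α) (t := z / (1 - α)) (s' := z) (t' := z)
        ha hb h0.le h1'.le (by ring) (by field_simp) (by field_simp)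
      linarith)
    linarith
  · set c := cp N ((1 / 2 : ℝ) : ℂ) * M * cp N ((1 / 2 : ℝ) : ℂ) with hcdef
    have hc : c.PosDef := sandwich_posDef hN.1 hM _
    have k1 := klein hc hN (-1) (1 - z) z z (z / (1 - α)) 1 (-(1 - z) / (1 - α))
      (fun a b ha hb => by
        have h := Real.geom_mean_le_arith_mean2_weighted hz0.le (sub_nonneg.2 hz)
          (mul_nonneg ha.le (Real.rpow_nonneg hb.le (-(1 - z) / (1 - α))))
          (Real.rpow_nonneg hb.le (z / (1 - α))) (by ring)
        rw [Real.mul_rpow ha.le (Real.rpow_nonneg hb.le _), ← Real.rpow_mul hb.le,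
          ← Real.rpow_mul hb.le, mul_assoc, ← Real.rpow_add hb] at h
        have e : -(1 - z) / (1 - α) * z + z / (1 - α) * (1 - z) = 0 := by ring
        rw [e, Real.rpow_zero, mul_one] at h
        rw [Real.rpow_one]
        linarith)
    have k2 := klein hM hN α (z - α) (-z) (z / α) (z / (1 - α)) 1 ((z - α) / (1 - α))
      (fun a b ha hb => by
        have h := young (w₁ := α / z) (w₂ := (z - α) / z) (s := z / α) (t := z / (1 - α))
          (s' := 1) (t' := (z - α) / (1 - α))
          ha hb (by positivity) (div_nonneg (by linarith) hz0.le) (by field_simp; ring)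
          (by field_simp) (by field_simp)
        have h' := mul_le_mul_of_nonneg_left h hz0.le
        have e : z * (α / z * a ^ (z / α) + (z - α) / z * b ^ (z / (1 - α))) =
          α * a ^ (z / α) + (z - α) * b ^ (z / (1 - α)) := by field_simp
        rw [e] at h'
        linarith)
    have e : (cp c ((1 : ℝ) : ℂ) * cp N ((-(1 - z) / (1 - α) : ℝ) : ℂ)).trace =
        (cp M ((1 : ℝ) : ℂ) * cp N (((z - α) / (1 - α) : ℝ) : ℂ)).trace := by
      rw [cp_oner hc, cp_oner hM, hcdef, Matrix.mul_assoc, Matrix.mul_assoc,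
        Matrix.trace_mul_comm, Matrix.mul_assoc, Matrix.mul_assoc, cp_mulr hN.1 rfl,
        cp_mulr hN.1 rfl]
      congr 4
      field_simp
      ring
    rw [e] at k1
    linarith

lemma tp_mono {A B : Matrix n n ℂ} (hA : A.PosDef) (hB : B.PosDef) (h : (B - A).PosSemidef)
    {q : ℝ} (hq : 1 ≤ q) : tp A q ≤ tp B q := by
  have hq0 : 0 < q := by linarith
  have h1 := trace_psd_mul h (cp_posDef hA.1 (q - 1)).posSemidef
  rw [Matrix.sub_mul, Matrix.trace_sub] at h1
  have e : A * cp A ((q - 1 : ℝ) : ℂ) = cp A (q : ℂ) := by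
    nth_rewrite 1 [← cp_oner hA]
    rw [cp_mulr hA.1]; ring
  have h2 := (Complex.le_def.1 h1).1
  rw [e, cp_trace_real hA, Complex.sub_re, Complex.ofReal_re, Complex.zero_re] at h2
  have k := klein hB hA (1 / q) (1 - 1 / q) (-1) q q 1 (q - 1) (fun a b ha hb => by
    have h := young (w₁ := 1 / q) (w₂ := 1 - 1 / q) (s := q) (t := q)
          (s' := 1) (t' := q - 1)
          ha hb (by positivity) (by rw [sub_nonneg, div_le_one hq0]; exact hq) (by ring)
          (by field_simp) (by field_simp)
    linarith)
  rw [cp_oner hB] at k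
  have : 0 ≤ 1 / q * (tp B q - tp A q) := by linarith
  have h3 : 0 ≤ tp B q - tp A q := by
    by_contra hc
    push Not at hc
    have := mul_neg_of_pos_of_neg (show 0 < 1 / q by positivity) hc
    linarith
  linarith

lemma char_sand {A : Matrix n n ℂ} (hA : A.IsHermitian) {s r : ℝ} (h : s + s = r)
    (B : Matrix n n ℂ) :
    (cp A (s : ℂ) * B * cp A (s : ℂ)).charpoly = (cp A (r : ℂ) * B).charpoly := by
  rw [Matrix.charpoly_mul_comm, ← Matrix.mul_assoc, cp_mulr hA h]

lemma tp_step {A B : Matrix n n ℂ} (hA : A.PosDef) (hB : B.PosDef) {u : ℝ} (t : ℝ) :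
    tp (cp B ((1 / 2 : ℝ) : ℂ) * cp A ((2 * u : ℝ) : ℂ) * cp B ((1 / 2 : ℝ) : ℂ)) t =
      tp (cp A (u : ℂ) * B * cp A (u : ℂ)) t := by
  refine tp_charpoly (sandwich_posDef hB.1 (cp_posDef hA.1 _) _) (sandwich_posDef hA.1 hB _) ?_ t
  rw [char_sand hB.1 (r := 1) (by norm_num), char_sand hA.1 (r := 2 * u) (by ring), cp_oner hB,
    Matrix.charpoly_mul_comm]

/-- The positive definite case. -/
lemma main_pd {Ψ : Matrix n n ℂ →ₗ[ℂ] Matrix m m ℂ}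
    (hpos : ∀ A : Matrix n n ℂ, A.PosSemidef → (Ψ A).PosSemidef)
    (htr : ∀ A : Matrix n n ℂ, (Ψ A).trace = A.trace)
    {ρ σ : Matrix n n ℂ} (hρ : ρ.PosDef) (hσ : σ.PosDef)
    (hR : (Ψ ρ).PosDef) (hS : (Ψ σ).PosDef) {α z : ℝ} (h0 : 0 < α)
    (h1 : α < 1) (hz1 : α ≤ z) (hz2 : 1 - α ≤ z) :
    Qaz α z ρ σ ≤ Qaz α z (Ψ ρ) (Ψ σ) := by
  have hz0 : 0 < z := by linarith
  have h1' : 0 < 1 - α := by linarith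
  have hQ : ∀ {k : Type _} [Fintype k] [DecidableEq k] {ρ σ : Matrix k k ℂ} (hρ : ρ.PosDef)
      (hσ : σ.PosDef), Qaz α z ρ σ = tp (cp σ (((1 - α) / (2 * z) : ℝ) : ℂ) *
        cp ρ ((α / z : ℝ) : ℂ) * cp σ (((1 - α) / (2 * z) : ℝ) : ℂ)) z := by
    intro k _ _ ρ σ hρ hσ
    have := sandwich_posDef hσ.1 (cp_posDef hρ.1 (α / z)) ((1 - α) / (2 * z))
    rw [Qaz, mpow_eq_cp hσ, mpow_eq_cp hρ, mpow_eq_cp this, tp]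
  have hQ' : ∀ {k : Type _} [Fintype k] [DecidableEq k] {ρ σ : Matrix k k ℂ} (hρ : ρ.PosDef)
      (hσ : σ.PosDef), Qaz α z ρ σ = tp (cp σ (((1 - α) / (2 * z) : ℝ) : ℂ) *
        cp ρ ((α / z : ℝ) : ℂ) * cp σ (((1 - α) / (2 * z) : ℝ) : ℂ)) z := by
    intro k _ _ ρ σ hρ hσ
    have := sandwich_posDef hσ.1 (cp_posDef hρ.1 (α / z)) ((1 - α) / (2 * z))
    rw [Qaz, mpow_eq_cp hσ, mpow_eq_cp hρ, mpow_eq_cp this, tp]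
  rw [hQ hρ hσ, hQ' hR hS]
  have hp : 1 ≤ z / α := by rw [one_le_div h0]; exact hz1
  have hq : 1 ≤ z / (1 - α) := by rw [one_le_div h1']; exact hz2
  set p := z / α with hpdef
  set q := z / (1 - α) with hqdef
  have hp0 : 0 < p := by linarith
  have hq0 : 0 < q := by linarith
  set u : ℝ := 1 / (2 * p) with hu
  set v : ℝ := 1 / (2 * q) with hv
  have ev : (1 - α) / (2 * z) = v := by rw [hv, hqdef]; field_simp
  have eu : α / z = 2 * u := by rw [hu, hpdef]; field_simp
  rw [ev, eu]
  set R := Ψ ρ with hRdef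
  set S := Ψ σ with hSdef
  have hd : (cp S (v : ℂ) * cp R ((2 * u : ℝ) : ℂ) * cp S (v : ℂ)).PosDef :=
    sandwich_posDef hS.1 (cp_posDef hR.1 _) _
  set d := cp S (v : ℂ) * cp R ((2 * u : ℝ) : ℂ) * cp S (v : ℂ) with hddef
  have ha : (cp S (v : ℂ) * cp d ((α - 1 : ℝ) : ℂ) * cp S (v : ℂ)).PosDef :=
    sandwich_posDef hS.1 (cp_posDef hd.1 _) _
  set a := cp S (v : ℂ) * cp d ((α - 1 : ℝ) : ℂ) * cp S (v : ℂ) with hadef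
  have hainv : cp a ((-1 : ℝ) : ℂ) =
      cp S ((-v : ℝ) : ℂ) * cp d ((1 - α : ℝ) : ℂ) * cp S ((-v : ℝ) : ℂ) := by
    have r1 := cp_inv1 hS.1 (s := v) (t := -v) (by ring)
    have r2 := cp_inv1 hd.1 (s := α - 1) (t := 1 - α) (by ring)
    have h3 : a * (cp S ((-v : ℝ) : ℂ) * cp d ((1 - α : ℝ) : ℂ) * cp S ((-v : ℝ) : ℂ)) = 1 := by
      calc _ = cp S (v : ℂ) * cp d ((α - 1 : ℝ) : ℂ) * (cp S (v : ℂ) * cp S ((-v : ℝ) : ℂ)) *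
            (cp d ((1 - α : ℝ) : ℂ) * cp S ((-v : ℝ) : ℂ)) := by
              rw [hadef]; simp only [Matrix.mul_assoc]
        _ = cp S (v : ℂ) * (cp d ((α - 1 : ℝ) : ℂ) * cp d ((1 - α : ℝ) : ℂ)) *
            cp S ((-v : ℝ) : ℂ) := by
              rw [r1]; simp only [Matrix.mul_assoc, Matrix.one_mul]
        _ = 1 := by rw [r2, Matrix.mul_one, r1]
    have h4 : cp a ((-1 : ℝ) : ℂ) * a = 1 := by
      have := cp_inv1 ha.1 (s := -1) (t := 1) (by ring)
      rwa [cp_oner ha] at this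
    exact left_inv_eq_right_inv h4 h3
  have hai : (cp a ((-1 : ℝ) : ℂ)).PosDef := cp_posDef ha.1 _
  have hg : (adj Ψ a).PosDef := adj_posDef hpos htr ha
  have hgi : (adj Ψ (cp a ((-1 : ℝ) : ℂ))).PosDef := adj_posDef hpos htr hai
  have hch : (adj Ψ (cp a ((-1 : ℝ) : ℂ)) - cp (adj Ψ a) ((-1 : ℝ) : ℂ)).PosSemidef := by
    have := choi hpos htr ha
    push_cast
    exact this
  set g := adj Ψ a with hgdef
  have hginv : (cp g ((-1 : ℝ) : ℂ)).PosDef := cp_posDef hg.1 _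
  have hM : (cp g ((1 / 2 : ℝ) : ℂ) * cp ρ ((2 * u : ℝ) : ℂ) * cp g ((1 / 2 : ℝ) : ℂ)).PosDef :=
    sandwich_posDef hg.1 (cp_posDef hρ.1 _) _
  have hN : (cp g ((-(1 / 2) : ℝ) : ℂ) * cp σ ((2 * v : ℝ) : ℂ) *
      cp g ((-(1 / 2) : ℝ) : ℂ)).PosDef :=
    sandwich_posDef hg.1 (cp_posDef hσ.1 _) _
  have hH := hoelder hM hN h0 h1 hz1 hz2
  set M := cp g ((1 / 2 : ℝ) : ℂ) * cp ρ ((2 * u : ℝ) : ℂ) * cp g ((1 / 2 : ℝ) : ℂ) with hMdef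
  set N := cp g ((-(1 / 2) : ℝ) : ℂ) * cp σ ((2 * v : ℝ) : ℂ) *
      cp g ((-(1 / 2) : ℝ) : ℂ) with hNdef
  have e1 : tp (cp N ((1 / 2 : ℝ) : ℂ) * M * cp N ((1 / 2 : ℝ) : ℂ)) z =
      tp (cp σ (v : ℂ) * cp ρ ((2 * u : ℝ) : ℂ) * cp σ (v : ℂ)) z := by
    refine tp_charpoly (sandwich_posDef hN.1 hM _) (sandwich_posDef hσ.1 (cp_posDef hρ.1 _) _) ?_ z
    rw [char_sand hN.1 (r := 1) (by norm_num), char_sand hσ.1 (r := 2 * v) (by ring), cp_oner hN]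
    have r1 := cp_inv1 hg.1 (s := -(1 / 2)) (t := 1 / 2) (by ring)
    have r2 := cp_inv1 hg.1 (s := 1 / 2) (t := -(1 / 2)) (by ring)
    have : N * M = cp g ((-(1 / 2) : ℝ) : ℂ) *
        (cp σ ((2 * v : ℝ) : ℂ) * cp ρ ((2 * u : ℝ) : ℂ) * cp g ((1 / 2 : ℝ) : ℂ)) := by
      calc N * M = cp g ((-(1 / 2) : ℝ) : ℂ) * cp σ ((2 * v : ℝ) : ℂ) *
            (cp g ((-(1 / 2) : ℝ) : ℂ) * cp g ((1 / 2 : ℝ) : ℂ)) * cp ρ ((2 * u : ℝ) : ℂ) *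
              cp g ((1 / 2 : ℝ) : ℂ) := by
            rw [hNdef, hMdef]; simp only [Matrix.mul_assoc]
        _ = _ := by rw [r1]; simp only [Matrix.mul_assoc, Matrix.one_mul]
    rw [this, Matrix.charpoly_mul_comm, Matrix.mul_assoc, r2, Matrix.mul_one]
  rw [e1] at hH
  have e2 : tp M p ≤ tp d z := by
    rw [hMdef, tp_step hρ hg]
    refine (contr hpos htr hρ hR ha hp).trans (le_of_eq ?_)
    have : tp d z = tp (cp d (α : ℂ)) p := by
      rw [tp_cp hd]; congr 1; rw [hpdef]; field_simp
    rw [this]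
    refine tp_charpoly (sandwich_posDef hR.1 ha _) (cp_posDef hd.1 _) ?_ p
    rw [char_sand hR.1 (r := 2 * u) (by ring)]
    have e : cp d (α : ℂ) = cp S (v : ℂ) * (cp R ((2 * u : ℝ) : ℂ) * cp S (v : ℂ) *
        cp d ((α - 1 : ℝ) : ℂ)) := by
      rw [← cp_mulr hd.1 (s := 1) (t := α - 1) (by ring), cp_oner hd]
      nth_rewrite 1 [hddef]
      simp only [Matrix.mul_assoc]
    rw [e, Matrix.charpoly_mul_comm (cp S (v : ℂ)), hadef]
    simp only [Matrix.mul_assoc]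
  have e3 : tp N q ≤ tp d z := by
    have s1 : tp N q = tp (cp σ (v : ℂ) * cp g ((-1 : ℝ) : ℂ) * cp σ (v : ℂ)) q := by
      refine tp_charpoly hN (sandwich_posDef hσ.1 hginv _) ?_ q
      rw [hNdef, char_sand hg.1 (r := -1) (by norm_num), char_sand hσ.1 (r := 2 * v) (by ring),
        Matrix.charpoly_mul_comm]
    rw [s1]
    have s2 : tp (cp σ (v : ℂ) * cp g ((-1 : ℝ) : ℂ) * cp σ (v : ℂ)) q ≤
        tp (cp σ (v : ℂ) * adj Ψ (cp a ((-1 : ℝ) : ℂ)) * cp σ (v : ℂ)) q := by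
      refine tp_mono (sandwich_posDef hσ.1 hginv _) (sandwich_posDef hσ.1 hgi _) ?_ hq
      have := hch.mul_mul_conjTranspose_same (cp σ (v : ℂ))
      rw [cp_herm hσ.1] at this
      rwa [Matrix.mul_sub, Matrix.sub_mul] at this
    refine s2.trans ((contr hpos htr hσ hS hai hq).trans (le_of_eq ?_))
    have : tp d z = tp (cp d ((1 - α : ℝ) : ℂ)) q := by
      rw [tp_cp hd]; congr 1; rw [hqdef]; field_simp
    rw [this, hainv]
    congr 1
    have r1 := cp_inv1 hS.1 (s := v) (t := -v) (by ring)
    have r2 := cp_inv1 hS.1 (s := -v) (t := v) (by ring)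
    calc _ = (cp S (v : ℂ) * cp S ((-v : ℝ) : ℂ)) * cp d ((1 - α : ℝ) : ℂ) *
          (cp S ((-v : ℝ) : ℂ) * cp S (v : ℂ)) := by simp only [Matrix.mul_assoc]; rfl
      _ = _ := by rw [r1, r2, Matrix.one_mul, Matrix.mul_one]
  have i1 := mul_le_mul_of_nonneg_left e2 h0.le
  have i2 := mul_le_mul_of_nonneg_left e3 h1'.le
  linarith

end final

section limit

variable {m n : Type*} [Fintype m] [Fintype n] [DecidableEq m] [DecidableEq n]

lemma mpow_cfc {A : Matrix n n ℂ} (hA : A.IsHermitian) (t : ℝ) :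
    mpow A t = cfc (fun x : ℝ => x ^ t) A := by
  rw [hA.cfc_eq, Matrix.IsHermitian.cfc, Unitary.conjStarAlgAut_apply, mpow, dif_pos hA]
  rfl

lemma mpow_herm (A : Matrix n n ℂ) (t : ℝ) : (mpow A t).IsHermitian := by
  by_cases hA : A.IsHermitian
  · rw [mpow_cfc hA]
    exact cfc_predicate (R := ℝ) _ A
  · rw [mpow, dif_neg hA]
    exact Matrix.isHermitian_zero

open scoped Matrix.Norms.L2Operator in
lemma mpow_cont {s : Set ℝ} {a : ℝ → Matrix n n ℂ} (ha : ContinuousOn a s)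
    (hh : ∀ x ∈ s, (a x).IsHermitian) {t : ℝ} (ht : 0 < t) :
    ContinuousOn (fun x => mpow (a x) t) s := by
  have h1 : ContinuousOn (fun x => cfc (fun x : ℝ => x ^ t) (a x)) s :=
    ContinuousOn.cfc_of_mem_nhdsSet (s := Set.univ) (fun x : ℝ => x ^ t) Filter.univ_mem ha hh
      (Real.continuous_rpow_const ht.le).continuousOn
  exact h1.congr fun x hx => mpow_cfc (hh x hx) t

lemma Qaz_cont {s : Set ℝ} {a b : ℝ → Matrix n n ℂ} (ha : ContinuousOn a s)
    (hb : ContinuousOn b s) (hha : ∀ x ∈ s, (a x).IsHermitian) (hhb : ∀ x ∈ s, (b x).IsHermitian)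
    {α z : ℝ} (h0 : 0 < α) (h1 : α < 1) (hz : 0 < z) :
    ContinuousOn (fun x => Qaz α z (a x) (b x)) s := by
  have h1' : 0 < 1 - α := by linarith
  have c1 := mpow_cont ha hha (t := α / z) (by positivity)
  have c2 := mpow_cont hb hhb (t := (1 - α) / (2 * z)) (by positivity)
  have c3 : ContinuousOn (fun x => mpow (b x) ((1 - α) / (2 * z)) * mpow (a x) (α / z) *
      mpow (b x) ((1 - α) / (2 * z))) s := (c2.mul c1).mul c2
  have c4 := mpow_cont c3 (fun x _ => by
    have := Matrix.isHermitian_mul_mul_conjTranspose (mpow (b x) ((1 - α) / (2 * z)))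
      (mpow_herm (a x) (α / z))
    rwa [(mpow_herm (b x) _).eq] at this) hz
  have c5 : Continuous fun M : Matrix n n ℂ => M.trace.re :=
    Complex.continuous_re.comp (continuous_id.matrix_trace)
  exact c5.comp_continuousOn c4

lemma Qaz_zero {α z : ℝ} (h0 : 0 < α) (hz : 0 < z) : Qaz α z (0 : Matrix n n ℂ) 0 = 0 := by
  have hm : ∀ {t : ℝ}, 0 < t → mpow (0 : Matrix n n ℂ) t = 0 := by
    intro t ht
    rw [mpow_cfc Matrix.isHermitian_zero, cfc_apply_zero, Real.zero_rpow ht.ne', map_zero]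
  rw [Qaz, hm (t := α / z) (by positivity), Matrix.mul_zero, Matrix.zero_mul, hm hz]
  simp

/-- Regularized channel. -/
noncomputable def reg (Ψ : Matrix n n ℂ →ₗ[ℂ] Matrix m m ℂ) (ε : ℝ) :
    Matrix n n ℂ →ₗ[ℂ] Matrix m m ℂ :=
  ((1 - ε : ℝ) : ℂ) • Ψ +
    (Matrix.traceLinearMap n ℂ ℂ).smulRight (((ε / Fintype.card m : ℝ) : ℂ) • (1 : Matrix m m ℂ))

lemma reg_apply (Ψ : Matrix n n ℂ →ₗ[ℂ] Matrix m m ℂ) (ε : ℝ) (A : Matrix n n ℂ) :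
    reg Ψ ε A = ((1 - ε : ℝ) : ℂ) • Ψ A +
      A.trace • (((ε / Fintype.card m : ℝ) : ℂ) • (1 : Matrix m m ℂ)) := by
  simp [reg]

lemma psd_smul {A : Matrix n n ℂ} (hA : A.PosSemidef) {c : ℝ} (hc : 0 ≤ c) :
    ((c : ℂ) • A).PosSemidef := hA.smul (by exact_mod_cast hc)

lemma main_psd [Nonempty n] [Nonempty m] {Ψ : Matrix n n ℂ →ₗ[ℂ] Matrix m m ℂ}
    (hpos : ∀ A : Matrix n n ℂ, A.PosSemidef → (Ψ A).PosSemidef)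
    (htr : ∀ A : Matrix n n ℂ, (Ψ A).trace = A.trace)
    {ρ σ : Matrix n n ℂ} (hρ : ρ.PosSemidef) (hσ : σ.PosSemidef) {α z : ℝ} (h0 : 0 < α)
    (h1 : α < 1) (hz1 : α ≤ z) (hz2 : 1 - α ≤ z) :
    Qaz α z ρ σ ≤ Qaz α z (Ψ ρ) (Ψ σ) := by
  have hz0 : 0 < z := by linarith
  have hcard : (0 : ℝ) < Fintype.card m := by exact_mod_cast Fintype.card_pos
  set P : Matrix n n ℂ → ℝ → Matrix n n ℂ := fun A ε => A + (ε : ℂ) • 1 with hP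
  have hPpsd : ∀ A : Matrix n n ℂ, A.PosSemidef → ∀ ε : ℝ, 0 ≤ ε → (P A ε).PosSemidef :=
    fun A hA ε hε => hA.add (psd_smul Matrix.PosSemidef.one hε)
  have hPpd : ∀ A : Matrix n n ℂ, A.PosSemidef → ∀ ε : ℝ, 0 < ε → (P A ε).PosDef :=
    fun A hA ε hε => Matrix.PosDef.posSemidef_add hA
      (Matrix.PosDef.one.smul (by exact_mod_cast hε))
  have hRpsd : ∀ ε : ℝ, 0 ≤ ε → ε ≤ 1 → ∀ A : Matrix n n ℂ, A.PosSemidef →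
      (reg Ψ ε A).PosSemidef := by
    intro ε he0 he1 A hA
    rw [reg_apply]
    refine (psd_smul (hpos A hA) (by linarith)).add ?_
    exact (psd_smul Matrix.PosSemidef.one (by positivity)).smul hA.trace_nonneg
  have hRpd : ∀ ε : ℝ, 0 < ε → ε ≤ 1 → ∀ A : Matrix n n ℂ, A.PosDef →
      (reg Ψ ε A).PosDef := by
    intro ε he0 he1 A hA
    rw [reg_apply]
    refine Matrix.PosDef.posSemidef_add (psd_smul (hpos A hA.posSemidef) (by linarith)) ?_
    refine Matrix.PosDef.smul (Matrix.PosDef.one.smul ?_) hA.trace_pos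
    have : 0 < ε / Fintype.card m := by positivity
    exact_mod_cast this
  have hRtr : ∀ ε : ℝ, ∀ A : Matrix n n ℂ, (reg Ψ ε A).trace = A.trace := by
    intro ε A
    have : (Fintype.card m : ℂ) ≠ 0 := by exact_mod_cast hcard.ne'
    rw [reg_apply, Matrix.trace_add, Matrix.trace_smul, Matrix.trace_smul, Matrix.trace_smul,
      htr, Matrix.trace_one]
    simp only [smul_eq_mul]
    push_cast
    field_simp
    ring
  have hPc : ∀ A : Matrix n n ℂ, Continuous (P A) := by
    intro A
    exact continuous_const.add (Complex.continuous_ofReal.smul continuous_const)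
  have hΨc : Continuous Ψ := LinearMap.continuous_of_finiteDimensional Ψ
  have hRc : ∀ A : Matrix n n ℂ, Continuous fun ε => reg Ψ ε (P A ε) := by
    intro A
    simp only [reg_apply]
    have e1 : Continuous fun ε : ℝ => ((1 - ε : ℝ) : ℂ) := by fun_prop
    have e2 : Continuous fun ε : ℝ => ((ε / Fintype.card m : ℝ) : ℂ) := by fun_prop
    exact (e1.smul (hΨc.comp (hPc A))).add ((hPc A).matrix_trace.smul (e2.smul continuous_const))
  have q1 : ContinuousOn (fun ε => Qaz α z (P ρ ε) (P σ ε)) (Set.Icc 0 1) :=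
    Qaz_cont (hPc ρ).continuousOn (hPc σ).continuousOn (fun ε h => (hPpsd ρ hρ ε h.1).1)
      (fun ε h => (hPpsd σ hσ ε h.1).1) h0 h1 hz0
  have q2 : ContinuousOn (fun ε => Qaz α z (reg Ψ ε (P ρ ε)) (reg Ψ ε (P σ ε))) (Set.Icc 0 1) :=
    Qaz_cont (hRc ρ).continuousOn (hRc σ).continuousOn
      (fun ε h => (hRpsd ε h.1 h.2 _ (hPpsd ρ hρ ε h.1)).1)
      (fun ε h => (hRpsd ε h.1 h.2 _ (hPpsd σ hσ ε h.1)).1) h0 h1 hz0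
  have hmem : (0 : ℝ) ∈ Set.Icc (0 : ℝ) 1 := ⟨le_rfl, zero_le_one⟩
  have hfin := ContinuousWithinAt.closure_le (s := Set.Ioo (0 : ℝ) 1) (x := 0)
    (by rw [closure_Ioo (by norm_num)]; exact hmem)
    ((q1 0 hmem).mono Set.Ioo_subset_Icc_self) ((q2 0 hmem).mono Set.Ioo_subset_Icc_self)
    (fun ε h => main_pd (hRpsd ε h.1.le h.2.le) (hRtr ε) (hPpd ρ hρ ε h.1) (hPpd σ hσ ε h.1)
      (hRpd ε h.1 h.2.le _ (hPpd ρ hρ ε h.1)) (hRpd ε h.1 h.2.le _ (hPpd σ hσ ε h.1))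
      h0 h1 hz1 hz2)
  have s1 : ∀ A : Matrix n n ℂ, P A 0 = A := by intro A; simp [hP]
  have s2 : ∀ A : Matrix n n ℂ, reg Ψ 0 A = Ψ A := by intro A; simp [reg_apply]
  simp only [s1, s2] at hfin
  exact hfin

end limit


end QDPI

/-- Data processing inequality for `0 < α < 1` and `z ≥ max{α, 1−α}`:
if `Ψ` is a positive trace-preserving linear map, then
`Q_{α,z}(Ψρ‖Ψσ) ≥ Q_{α,z}(ρ‖σ)`. -/
theorem Qaz_DPI (n m : ℕ) (α z : ℝ) (hα0 : 0 < α) (hα1 : α < 1)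
    (hz : max α (1 - α) ≤ z)
    (Ψ : Matrix (Fin n) (Fin n) ℂ →ₗ[ℂ] Matrix (Fin m) (Fin m) ℂ)
    (hΨpos : ∀ A : Matrix (Fin n) (Fin n) ℂ, A.PosSemidef → (Ψ A).PosSemidef)
    (hΨtr : ∀ A : Matrix (Fin n) (Fin n) ℂ, (Ψ A).trace = A.trace)
    (ρ σ : Matrix (Fin n) (Fin n) ℂ) (hρ : ρ.PosSemidef) (hσ : σ.PosSemidef) :
    Qaz α z ρ σ ≤ Qaz α z (Ψ ρ) (Ψ σ) := by
  have hz1 : α ≤ z := (le_max_left _ _).trans hz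
  have hz2 : 1 - α ≤ z := (le_max_right _ _).trans hz
  have hz0 : 0 < z := by linarith
  rcases Nat.eq_zero_or_pos n with hn | hn
  · subst hn
    have e1 : ρ = 0 := Subsingleton.elim _ _
    have e2 : σ = 0 := Subsingleton.elim _ _
    rw [e1, e2, map_zero, QDPI.Qaz_zero hα0 hz0, QDPI.Qaz_zero hα0 hz0]
  · rcases Nat.eq_zero_or_pos m with hm | hm
    · subst hm
      have h := hΨtr 1
      rw [Matrix.trace_one, Fintype.card_fin, Matrix.trace_fin_zero] at h
      have : (n : ℂ) ≠ 0 := by exact_mod_cast hn.ne'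
      exact absurd h.symm this
    · haveI : Nonempty (Fin n) := ⟨⟨0, hn⟩⟩
      haveI : Nonempty (Fin m) := ⟨⟨0, hm⟩⟩
      exact QDPI.main_psd hΨpos hΨtr hρ hσ hα0 hα1 hz1 hz2
end

section
/- (Joint concavity.) Let 0 < α < 1 and z ≥ max{α, 1 − α}, and let λ ∈ [0, 1]. Then for all n×n positive semidefinite complex matrices ρ₁, ρ₂, σ₁, σ₂: Q_{α,z}(λρ₁ + (1−λ)ρ₂ ‖ λσ₁ + (1−λ)σ₂) ≥ λ · Q_{α,z}(ρ₁‖σ₁) + (1−λ) · Q_{α,z}(ρ₂‖σ₂). -/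
open Matrix
open scoped ComplexOrder

section AZ
variable {n : Type*} [Fintype n] [DecidableEq n]

lemma az_mpow_def {A : Matrix n n ℂ} (hA : A.IsHermitian) (t : ℝ) :
    mpow A t = (hA.eigenvectorUnitary : Matrix n n ℂ) *
      Matrix.diagonal (fun i => ((hA.eigenvalues i ^ t : ℝ) : ℂ)) *
      (hA.eigenvectorUnitary : Matrix n n ℂ)ᴴ := by
  rw [mpow, dif_pos hA, Matrix.star_eq_conjTranspose]

lemma az_mpow_cfc {A : Matrix n n ℂ} (hA : A.IsHermitian) (t : ℝ) :
    mpow A t = cfc (fun x : ℝ => x ^ t) A := by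
  rw [hA.cfc_eq, az_mpow_def hA, Matrix.IsHermitian.cfc, Unitary.conjStarAlgAut_apply]
  rfl

lemma az_cont (f : ℝ → ℝ) (A : Matrix n n ℂ) : ContinuousOn f (spectrum ℝ A) :=
  (Matrix.finite_real_spectrum (A := A)).continuousOn f

lemma az_herm {A : Matrix n n ℂ} (hA : A.IsHermitian) (t : ℝ) : (mpow A t).IsHermitian := by
  rw [az_mpow_cfc hA]
  exact cfc_predicate _ A

lemma az_spec_pos {A : Matrix n n ℂ} (hA : A.PosDef) {x : ℝ} (hx : x ∈ spectrum ℝ A) : 0 < x := by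
  rw [hA.1.spectrum_real_eq_range_eigenvalues] at hx
  obtain ⟨i, rfl⟩ := hx
  exact hA.eigenvalues_pos i

lemma az_spec_nonneg {A : Matrix n n ℂ} (hA : A.PosSemidef) {x : ℝ} (hx : x ∈ spectrum ℝ A) :
    0 ≤ x := by
  rw [hA.1.spectrum_real_eq_range_eigenvalues] at hx
  obtain ⟨i, rfl⟩ := hx
  exact hA.eigenvalues_nonneg i

lemma az_posDef {A : Matrix n n ℂ} (hA : A.PosDef) (t : ℝ) : (mpow A t).PosDef := by
  rw [(az_herm hA.1 t).posDef_iff_eigenvalues_pos]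
  intro i
  have h := (az_herm hA.1 t).eigenvalues_mem_spectrum_real i
  generalize (az_herm hA.1 t).eigenvalues i = y at h
  rw [az_mpow_cfc hA.1, cfc_map_spectrum _ A hA.1.isSelfAdjoint (az_cont _ A)] at h
  obtain ⟨x, hx, rfl⟩ := h
  exact Real.rpow_pos_of_pos (az_spec_pos hA hx) t

lemma az_posSemidef {A : Matrix n n ℂ} (hA : A.PosSemidef) (t : ℝ) : (mpow A t).PosSemidef := by
  rw [(az_herm hA.1 t).posSemidef_iff_eigenvalues_nonneg]
  intro i
  have h := (az_herm hA.1 t).eigenvalues_mem_spectrum_real i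
  simp only [Pi.zero_apply]
  generalize (az_herm hA.1 t).eigenvalues i = y at h
  rw [az_mpow_cfc hA.1, cfc_map_spectrum _ A hA.1.isSelfAdjoint (az_cont _ A)] at h
  obtain ⟨x, hx, rfl⟩ := h
  exact Real.rpow_nonneg (az_spec_nonneg hA hx) t

lemma az_mul {A : Matrix n n ℂ} (hA : A.PosDef) (s t : ℝ) :
    mpow A s * mpow A t = mpow A (s + t) := by
  rw [az_mpow_cfc hA.1, az_mpow_cfc hA.1, az_mpow_cfc hA.1,
    ← cfc_mul _ _ A (az_cont _ A) (az_cont _ A)]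
  apply cfc_congr
  intro x hx
  exact (Real.rpow_add (az_spec_pos hA hx) s t).symm

lemma az_mul' {A : Matrix n n ℂ} (hA : A.PosSemidef) {s t : ℝ} (hs : 0 ≤ s) (ht : 0 ≤ t) :
    mpow A s * mpow A t = mpow A (s + t) := by
  rw [az_mpow_cfc hA.1, az_mpow_cfc hA.1, az_mpow_cfc hA.1,
    ← cfc_mul _ _ A (az_cont _ A) (az_cont _ A)]
  apply cfc_congr
  intro x hx
  exact (Real.rpow_add_of_nonneg (az_spec_nonneg hA hx) hs ht).symm

lemma az_mpow_mpow {A : Matrix n n ℂ} (hA : A.PosSemidef) (s t : ℝ) :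
    mpow (mpow A s) t = mpow A (s * t) := by
  rw [az_mpow_cfc (az_herm hA.1 s), az_mpow_cfc hA.1, az_mpow_cfc hA.1]
  refine (cfc_comp' (fun x : ℝ => x ^ t) (fun x : ℝ => x ^ s) A
      (((Matrix.finite_real_spectrum (A := A)).image _).continuousOn _) (az_cont _ A) hA.1).symm.trans ?_
  apply cfc_congr
  intro x hx
  exact (Real.rpow_mul (az_spec_nonneg hA hx) s t).symm

lemma az_one {A : Matrix n n ℂ} (hA : A.IsHermitian) : mpow A 1 = A := by
  rw [az_mpow_cfc hA]
  simp only [Real.rpow_one]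
  exact cfc_id' ℝ A hA

lemma az_zero {A : Matrix n n ℂ} (hA : A.IsHermitian) : mpow A 0 = 1 := by
  rw [az_mpow_cfc hA]
  simp only [Real.rpow_zero]
  exact cfc_const_one ℝ A hA

lemma az_trace {A : Matrix n n ℂ} (hA : A.IsHermitian) (t : ℝ) :
    (mpow A t).trace.re = ∑ i, hA.eigenvalues i ^ t := by
  rw [az_mpow_def hA, Matrix.trace_mul_cycle, ← Matrix.star_eq_conjTranspose,
    Unitary.coe_star_mul_self]
  simp [Matrix.trace]

lemma az_trace_comm (X : Matrix n n ℂ) (t : ℝ) :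
    (mpow (X * Xᴴ) t).trace.re = (mpow (Xᴴ * X) t).trace.re := by
  have h1 := (Matrix.posSemidef_self_mul_conjTranspose X).1
  have h2 := (Matrix.posSemidef_conjTranspose_mul_self X).1
  rw [az_trace h1, az_trace h2]
  have : h1.eigenvalues = h2.eigenvalues :=
    (Matrix.IsHermitian.eigenvalues_eq_eigenvalues_iff h1 h2).2 (Matrix.charpoly_mul_comm _ _)
  rw [this]

lemma az_trace_spec {A B : Matrix n n ℂ} (hA : A.IsHermitian) (hB : B.IsHermitian)
    (K : Matrix n n ℂ) (s t : ℝ) :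
    (mpow A s * K * mpow B t * Kᴴ).trace.re =
      ∑ i, ∑ j, Complex.normSq (((hA.eigenvectorUnitary : Matrix n n ℂ)ᴴ * K *
        (hB.eigenvectorUnitary : Matrix n n ℂ)) i j) *
        (hA.eigenvalues i ^ s * hB.eigenvalues j ^ t) := by
  rw [az_mpow_def hA, az_mpow_def hB]
  set U := (hA.eigenvectorUnitary : Matrix n n ℂ)
  set V := (hB.eigenvectorUnitary : Matrix n n ℂ)
  set D := Matrix.diagonal (fun i => ((hA.eigenvalues i ^ s : ℝ) : ℂ))
  set E := Matrix.diagonal (fun i => ((hB.eigenvalues i ^ t : ℝ) : ℂ))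
  have : (U * D * Uᴴ * K * (V * E * Vᴴ) * Kᴴ).trace = (D * (Uᴴ * K * V) * E * (Uᴴ * K * V)ᴴ).trace := by
    have e1 : U * D * Uᴴ * K * (V * E * Vᴴ) * Kᴴ = U * (D * Uᴴ * K * V * E * Vᴴ * Kᴴ) := by
      simp only [Matrix.mul_assoc]
    rw [e1, Matrix.trace_mul_comm]
    simp only [Matrix.conjTranspose_mul, Matrix.conjTranspose_conjTranspose, Matrix.mul_assoc]
  rw [this]
  generalize Uᴴ * K * V = W
  simp only [Matrix.trace, Matrix.diag_apply, Matrix.mul_apply (M := D * W * E), D, E,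
    Matrix.mul_diagonal, Matrix.diagonal_mul, Matrix.conjTranspose_apply, Complex.re_sum]
  refine Finset.sum_congr rfl fun i _ => Finset.sum_congr rfl fun j _ => ?_
  simp only [Complex.star_def, Complex.normSq_apply, Complex.mul_re, Complex.mul_im,
    Complex.ofReal_re, Complex.ofReal_im, Complex.conj_re, Complex.conj_im]
  ring

/-- overlap matrix of two eigenbases -/
noncomputable def azW {A B : Matrix n n ℂ} (hA : A.IsHermitian) (hB : B.IsHermitian)
    (K : Matrix n n ℂ) : Matrix n n ℂ :=
  (hA.eigenvectorUnitary : Matrix n n ℂ)ᴴ * K * (hB.eigenvectorUnitary : Matrix n n ℂ)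

lemma az_UU {A : Matrix n n ℂ} (hA : A.IsHermitian) :
    (hA.eigenvectorUnitary : Matrix n n ℂ) * (hA.eigenvectorUnitary : Matrix n n ℂ)ᴴ = 1 := by
  rw [← Matrix.star_eq_conjTranspose]
  exact Unitary.coe_mul_star_self _

lemma az_UU' {A : Matrix n n ℂ} (hA : A.IsHermitian) :
    (hA.eigenvectorUnitary : Matrix n n ℂ)ᴴ * (hA.eigenvectorUnitary : Matrix n n ℂ) = 1 := by
  rw [← Matrix.star_eq_conjTranspose]
  exact Unitary.coe_star_mul_self _

lemma azW_row {A B : Matrix n n ℂ} (hA : A.IsHermitian) (hB : B.IsHermitian) (i : n) :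
    ∑ j, Complex.normSq (azW hA hB 1 i j) = 1 := by
  have h : azW hA hB 1 * (azW hA hB 1)ᴴ = 1 := by
    simp only [azW, Matrix.mul_one, Matrix.conjTranspose_mul, Matrix.conjTranspose_conjTranspose]
    rw [Matrix.mul_assoc, ← Matrix.mul_assoc _ _ (hA.eigenvectorUnitary : Matrix n n ℂ), az_UU hB,
      Matrix.one_mul, az_UU' hA]
  have h2 := congrArg Complex.re (congrFun (congrFun h i) i)
  rw [Matrix.mul_apply, Matrix.one_apply_eq, Complex.re_sum] at h2
  rw [← Complex.one_re, ← h2]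
  refine Finset.sum_congr rfl fun j _ => ?_
  simp [Matrix.conjTranspose_apply, Complex.normSq_apply]

lemma azW_col {A B : Matrix n n ℂ} (hA : A.IsHermitian) (hB : B.IsHermitian) (j : n) :
    ∑ i, Complex.normSq (azW hA hB 1 i j) = 1 := by
  have h : (azW hA hB 1)ᴴ * azW hA hB 1 = 1 := by
    simp only [azW, Matrix.mul_one, Matrix.conjTranspose_mul, Matrix.conjTranspose_conjTranspose]
    rw [Matrix.mul_assoc, ← Matrix.mul_assoc _ _ (hB.eigenvectorUnitary : Matrix n n ℂ), az_UU hA,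
      Matrix.one_mul, az_UU' hB]
  have h2 := congrArg Complex.re (congrFun (congrFun h j) j)
  rw [Matrix.mul_apply, Matrix.one_apply_eq, Complex.re_sum] at h2
  rw [← Complex.one_re, ← h2]
  refine Finset.sum_congr rfl fun j _ => ?_
  simp [Matrix.conjTranspose_apply, Complex.normSq_apply]

/-- trace Young inequality -/
lemma az_young {A B : Matrix n n ℂ} (hA : A.PosSemidef) (hB : B.PosSemidef) {p : ℝ}
    (hp0 : 0 < p) (hp1 : p ≤ 1) :
    (A * mpow B (1 - p)).trace.re ≤ p * (mpow A (1 / p)).trace.re + (1 - p) * B.trace.re := by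
  have e := az_trace_spec hA.1 hB.1 1 1 (1 - p)
  rw [az_one hA.1] at e
  simp only [Matrix.mul_one, Matrix.conjTranspose_one] at e
  rw [e, az_trace hA.1]
  have hBt := az_trace hB.1 1
  rw [az_one hB.1] at hBt
  rw [hBt]
  have e1 : ∑ i, hA.1.eigenvalues i ^ (1 / p) =
      ∑ i, ∑ j, Complex.normSq (azW hA.1 hB.1 1 i j) * hA.1.eigenvalues i ^ (1 / p) := by
    refine Finset.sum_congr rfl fun i _ => ?_
    rw [← Finset.sum_mul, azW_row, one_mul]
  have e2 : ∑ j, hB.1.eigenvalues j ^ (1 : ℝ) =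
      ∑ i, ∑ j, Complex.normSq (azW hA.1 hB.1 1 i j) * hB.1.eigenvalues j ^ (1 : ℝ) := by
    rw [Finset.sum_comm]
    refine Finset.sum_congr rfl fun j _ => ?_
    rw [← Finset.sum_mul, azW_col, one_mul]
  rw [e1, e2, Finset.mul_sum, Finset.mul_sum, ← Finset.sum_add_distrib]
  refine Finset.sum_le_sum fun i _ => ?_
  rw [Finset.mul_sum, Finset.mul_sum, ← Finset.sum_add_distrib]
  refine Finset.sum_le_sum fun j _ => ?_
  have ha := hA.eigenvalues_nonneg i
  have hb := hB.eigenvalues_nonneg j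
  have h := Real.geom_mean_le_arith_mean2_weighted hp0.le (sub_nonneg.2 hp1)
    (Real.rpow_nonneg ha (1 / p)) hb (by ring)
  rw [← Real.rpow_mul ha, one_div_mul_cancel hp0.ne'] at h
  have h3 := mul_le_mul_of_nonneg_left h (Complex.normSq_nonneg (azW hA.1 hB.1 1 i j))
  have e3 : azW hA.1 hB.1 1 = (hA.1.eigenvectorUnitary : Matrix n n ℂ)ᴴ * 1 *
    (hB.1.eigenvectorUnitary : Matrix n n ℂ) := rfl
  simp only [Matrix.mul_one] at e3
  rw [← e3, Real.rpow_one (hB.1.eigenvalues j)]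
  linarith

lemma az_par {a b : ℝ} (ha : 0 < a) (hb : 0 < b) (x y : ℂ) :
    Complex.normSq (x + y) * (a * b / (a + b)) ≤ Complex.normSq x * a + Complex.normSq y * b := by
  rw [mul_div_assoc', div_le_iff₀ (by positivity)]
  simp only [Complex.normSq_apply, Complex.add_re, Complex.add_im]
  nlinarith [sq_nonneg (a * x.re - b * y.re), sq_nonneg (a * x.im - b * y.im)]

/-- parallel sum functional -/
noncomputable def azF {A B : Matrix n n ℂ} (hA : A.IsHermitian) (hB : B.IsHermitian)
    (K : Matrix n n ℂ) (t : ℝ) : ℝ :=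
  ∑ i, ∑ j, Complex.normSq (azW hA hB K i j) *
    (hA.eigenvalues i * (t * hB.eigenvalues j) / (hA.eigenvalues i + t * hB.eigenvalues j))

lemma az_lin {A B : Matrix n n ℂ} (hA : A.IsHermitian) (hB : B.IsHermitian)
    (K M : Matrix n n ℂ) (t : ℝ) :
    (A * M * Mᴴ).trace.re + t * ((K - M) * B * (K - M)ᴴ).trace.re =
     ∑ i, ∑ j, (Complex.normSq (azW hA hB M i j) * hA.eigenvalues i +
        Complex.normSq (azW hA hB (K - M) i j) * (t * hB.eigenvalues j)) := by
  have h1 := az_trace_spec hA hB M 1 0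
  have h2 := az_trace_spec hA hB (K - M) 0 1
  rw [az_one hA, az_zero hB, Matrix.mul_one] at h1
  rw [az_one hB, az_zero hA, Matrix.one_mul] at h2
  rw [h1, h2, Finset.mul_sum, ← Finset.sum_add_distrib]
  refine Finset.sum_congr rfl fun i _ => ?_
  rw [Finset.mul_sum, ← Finset.sum_add_distrib]
  refine Finset.sum_congr rfl fun j _ => ?_
  simp only [Real.rpow_one, Real.rpow_zero, azW]
  ring

lemma azW_add {A B : Matrix n n ℂ} (hA : A.IsHermitian) (hB : B.IsHermitian)
    (K M : Matrix n n ℂ) : azW hA hB K = azW hA hB M + azW hA hB (K - M) := by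
  simp only [azW, Matrix.mul_sub, Matrix.sub_mul]
  abel

lemma azF_le {A B : Matrix n n ℂ} (hA : A.PosDef) (hB : B.PosDef)
    (K M : Matrix n n ℂ) {t : ℝ} (ht : 0 < t) :
    azF hA.1 hB.1 K t ≤ (A * M * Mᴴ).trace.re + t * ((K - M) * B * (K - M)ᴴ).trace.re := by
  rw [az_lin hA.1 hB.1, azF]
  refine Finset.sum_le_sum fun i _ => Finset.sum_le_sum fun j _ => ?_
  rw [azW_add hA.1 hB.1 K M]
  exact az_par (hA.eigenvalues_pos i) (mul_pos ht (hB.eigenvalues_pos j)) _ _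

lemma azF_eq {A B : Matrix n n ℂ} (hA : A.PosDef) (hB : B.PosDef)
    (K : Matrix n n ℂ) {t : ℝ} (ht : 0 < t) : ∃ M : Matrix n n ℂ,
    azF hA.1 hB.1 K t = (A * M * Mᴴ).trace.re + t * ((K - M) * B * (K - M)ᴴ).trace.re := by
  let W : Matrix n n ℂ := Matrix.of fun i j => azW hA.1 hB.1 K i j *
    ((t * hB.1.eigenvalues j / (hA.1.eigenvalues i + t * hB.1.eigenvalues j) : ℝ) : ℂ)
  refine ⟨(hA.1.eigenvectorUnitary : Matrix n n ℂ) * W * (hB.1.eigenvectorUnitary : Matrix n n ℂ)ᴴ, ?_⟩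
  set M := (hA.1.eigenvectorUnitary : Matrix n n ℂ) * W * (hB.1.eigenvectorUnitary : Matrix n n ℂ)ᴴ
    with hM
  have hW : azW hA.1 hB.1 M = W := by
    rw [azW, hM, Matrix.mul_assoc, Matrix.mul_assoc, az_UU' hB.1, Matrix.mul_one,
      ← Matrix.mul_assoc, az_UU' hA.1, Matrix.one_mul]
  have hW2 : azW hA.1 hB.1 (K - M) = azW hA.1 hB.1 K - W := by
    rw [← hW, azW_add hA.1 hB.1 K M]; abel
  rw [az_lin hA.1 hB.1, azF]
  refine Finset.sum_congr rfl fun i _ => Finset.sum_congr rfl fun j _ => ?_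
  have ha := hA.eigenvalues_pos i
  have hb := mul_pos ht (hB.eigenvalues_pos j)
  rw [hW2, hW, Matrix.sub_apply]
  simp only [W, Matrix.of_apply]
  generalize hA.1.eigenvalues i = a at *
  generalize t * hB.1.eigenvalues j = b at *
  generalize azW hA.1 hB.1 K i j = w
  have : w - w * ((b / (a + b) : ℝ) : ℂ) = w * ((a / (a + b) : ℝ) : ℂ) := by
    have h : (a / (a + b) : ℝ) = 1 - b / (a + b) := by field_simp; ring
    rw [h]; push_cast; ring
  rw [this, Complex.normSq_mul, Complex.normSq_mul, Complex.normSq_ofReal, Complex.normSq_ofReal]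
  field_simp
  ring

lemma az_comb {A₁ A₂ : Matrix n n ℂ} (h₁ : A₁.PosDef) (h₂ : A₂.PosDef) {l : ℝ} (hl0 : 0 ≤ l)
    (hl1 : l ≤ 1) : (l • A₁ + (1 - l) • A₂).PosDef := by
  rcases eq_or_lt_of_le hl0 with h | h
  · subst h; simpa using h₂
  · refine Matrix.PosDef.add_posSemidef ?_ ?_
    · exact h₁.smul h
    · exact h₂.posSemidef.smul (sub_nonneg.2 hl1)

lemma azF_concave {A₁ A₂ B₁ B₂ A B : Matrix n n ℂ} (hA₁ : A₁.PosDef) (hA₂ : A₂.PosDef)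
    (hB₁ : B₁.PosDef) (hB₂ : B₂.PosDef) (hA : A.PosDef) (hB : B.PosDef) {l : ℝ} (hl0 : 0 ≤ l)
    (hl1 : l ≤ 1) (eA : A = l • A₁ + (1 - l) • A₂) (eB : B = l • B₁ + (1 - l) • B₂)
    (K : Matrix n n ℂ) {t : ℝ} (ht : 0 < t) :
    l * azF hA₁.1 hB₁.1 K t + (1 - l) * azF hA₂.1 hB₂.1 K t ≤ azF hA.1 hB.1 K t := by
  obtain ⟨M, hM⟩ := azF_eq hA hB K ht
  have h1 := mul_le_mul_of_nonneg_left (azF_le hA₁ hB₁ K M ht) hl0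
  have h2 := mul_le_mul_of_nonneg_left (azF_le hA₂ hB₂ K M ht) (sub_nonneg.2 hl1)
  rw [hM, eA, eB]
  simp only [Matrix.add_mul, Matrix.mul_add, Matrix.smul_mul, Matrix.mul_smul, Matrix.trace_add,
    Matrix.trace_smul, Complex.add_re, Complex.real_smul, Complex.re_ofReal_mul]
  linarith

lemma az_lieb_int {p : ℝ} {μ : MeasureTheory.Measure ℝ}
    (hμ : ∀ x ∈ Set.Ici (0 : ℝ),
      (MeasureTheory.IntegrableOn (fun t => Real.rpowIntegrand₀₁ p t x) (Set.Ioi 0) μ)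
      ∧ x ^ p = ∫ t in Set.Ioi 0, Real.rpowIntegrand₀₁ p t x ∂μ) (hp : p ∈ Set.Ioo (0 : ℝ) 1)
    {A B : Matrix n n ℂ} (hA : A.PosDef) (hB : B.PosDef) (K : Matrix n n ℂ) :
    MeasureTheory.IntegrableOn (fun t => t ^ (p - 2) * azF hA.1 hB.1 K t) (Set.Ioi 0) μ ∧
    (mpow A p * K * mpow B (1 - p) * Kᴴ).trace.re =
      ∫ t in Set.Ioi 0, t ^ (p - 2) * azF hA.1 hB.1 K t ∂μ := by
  let G : ℝ → ℝ := fun t => ∑ i, ∑ j, Complex.normSq (azW hA.1 hB.1 K i j) *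
    (hB.1.eigenvalues j * Real.rpowIntegrand₀₁ p t (hA.1.eigenvalues i / hB.1.eigenvalues j))
  have hG : Set.EqOn G (fun t => t ^ (p - 2) * azF hA.1 hB.1 K t) (Set.Ioi 0) := by
    intro t ht
    have ht : 0 < t := ht
    simp only [G, azF, Finset.mul_sum]
    refine Finset.sum_congr rfl fun i _ => Finset.sum_congr rfl fun j _ => ?_
    have ha := hA.eigenvalues_pos i
    have hb := hB.eigenvalues_pos j
    rw [Real.rpowIntegrand₀₁_eq_pow_div hp ht.le (div_pos ha hb).le]
    have : t ^ (p - 1) = t ^ (p - 2) * t := by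
      rw [← Real.rpow_add_one ht.ne']; congr 1; ring
    rw [this]
    field_simp
    rw [add_comm]
  have hx : ∀ i j, hA.1.eigenvalues i / hB.1.eigenvalues j ∈ Set.Ici (0 : ℝ) := fun i j =>
    (div_pos (hA.eigenvalues_pos i) (hB.eigenvalues_pos j)).le
  have hintg : ∀ i j, MeasureTheory.IntegrableOn (fun t => Complex.normSq (azW hA.1 hB.1 K i j) *
    (hB.1.eigenvalues j * Real.rpowIntegrand₀₁ p t (hA.1.eigenvalues i / hB.1.eigenvalues j)))
      (Set.Ioi 0) μ := fun i j => (((hμ _ (hx i j)).1).const_mul _).const_mul _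
  constructor
  · rw [← MeasureTheory.integrableOn_congr_fun hG measurableSet_Ioi]
    exact MeasureTheory.integrable_finsetSum _ fun i _ =>
      MeasureTheory.integrable_finsetSum _ fun j _ => hintg i j
  · rw [← MeasureTheory.setIntegral_congr_fun measurableSet_Ioi hG]
    simp only [G]
    rw [az_trace_spec hA.1 hB.1, MeasureTheory.integral_finsetSum _ (fun i _ =>
      MeasureTheory.integrable_finsetSum _ fun j _ => hintg i j)]
    refine Finset.sum_congr rfl fun i _ => ?_
    rw [MeasureTheory.integral_finsetSum _ (fun j _ => hintg i j)]
    refine Finset.sum_congr rfl fun j _ => ?_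
    rw [MeasureTheory.integral_const_mul, MeasureTheory.integral_const_mul, ← (hμ _ (hx i j)).2]
    have ha := hA.eigenvalues_pos i
    have hb := hB.eigenvalues_pos j
    rw [Real.div_rpow ha.le hb.le, Real.rpow_sub hb, Real.rpow_one]
    simp only [azW]
    field_simp

/-- Lieb concavity -/
lemma az_lieb {A₁ A₂ B₁ B₂ A B : Matrix n n ℂ} (hA₁ : A₁.PosDef) (hA₂ : A₂.PosDef)
    (hB₁ : B₁.PosDef) (hB₂ : B₂.PosDef) (hA : A.PosDef) (hB : B.PosDef) {l : ℝ} (hl0 : 0 ≤ l)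
    (hl1 : l ≤ 1) (eA : A = l • A₁ + (1 - l) • A₂) (eB : B = l • B₁ + (1 - l) • B₂)
    (K : Matrix n n ℂ) {p : ℝ} (hp0 : 0 < p) (hp1 : p ≤ 1) :
    l * (mpow A₁ p * K * mpow B₁ (1 - p) * Kᴴ).trace.re +
      (1 - l) * (mpow A₂ p * K * mpow B₂ (1 - p) * Kᴴ).trace.re ≤
      (mpow A p * K * mpow B (1 - p) * Kᴴ).trace.re := by
  rcases eq_or_lt_of_le hp1 with h | h
  · subst h
    rw [sub_self, az_zero hB.1, az_zero hB₁.1, az_zero hB₂.1, az_one hA.1, az_one hA₁.1,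
      az_one hA₂.1, eA]
    simp only [Matrix.add_mul, Matrix.mul_add, Matrix.smul_mul, Matrix.mul_smul, Matrix.trace_add,
      Matrix.trace_smul, Complex.add_re, Complex.real_smul, Complex.re_ofReal_mul]
    linarith
  · have hp : p ∈ Set.Ioo (0 : ℝ) 1 := ⟨hp0, h⟩
    obtain ⟨μ, hμ⟩ := Real.exists_measure_rpow_eq_integral_rpowIntegrand₀₁ hp
    obtain ⟨i0, e0⟩ := az_lieb_int hμ hp hA hB K
    obtain ⟨i1, e1⟩ := az_lieb_int hμ hp hA₁ hB₁ K
    obtain ⟨i2, e2⟩ := az_lieb_int hμ hp hA₂ hB₂ K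
    rw [e0, e1, e2, ← MeasureTheory.integral_const_mul, ← MeasureTheory.integral_const_mul,
      ← MeasureTheory.integral_add (i1.const_mul l) (i2.const_mul (1 - l))]
    refine MeasureTheory.setIntegral_mono_on ((i1.const_mul l).add (i2.const_mul (1 - l))) i0
      measurableSet_Ioi ?_
    intro t ht
    have ht : 0 < t := ht
    have h1 := mul_le_mul_of_nonneg_left
      (azF_concave hA₁ hA₂ hB₁ hB₂ hA hB hl0 hl1 eA eB K ht) (Real.rpow_nonneg ht.le (p - 2))
    linarith

lemma az_conj {A K : Matrix n n ℂ} (hA : A.PosDef) (hK : IsUnit K) : (Kᴴ * A * K).PosDef := by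
  rw [← Matrix.star_eq_conjTranspose]
  exact (Matrix.IsUnit.posDef_star_left_conjugate_iff hK).2 hA

/-- Epstein concavity -/
lemma az_epstein {A₁ A₂ A : Matrix n n ℂ} (hA₁ : A₁.PosDef) (hA₂ : A₂.PosDef)
    (hA : A.PosDef) {l : ℝ} (hl0 : 0 ≤ l)
    (hl1 : l ≤ 1) (eA : A = l • A₁ + (1 - l) • A₂)
    {K : Matrix n n ℂ} (hK : IsUnit K) {p : ℝ} (hp0 : 0 < p) (hp1 : p ≤ 1) :
    l * (mpow (Kᴴ * mpow A₁ p * K) (1 / p)).trace.re +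
      (1 - l) * (mpow (Kᴴ * mpow A₂ p * K) (1 / p)).trace.re ≤
      (mpow (Kᴴ * mpow A p * K) (1 / p)).trace.re := by
  have hX₁ := az_conj (az_posDef hA₁ p) hK
  have hX₂ := az_conj (az_posDef hA₂ p) hK
  have hX := az_conj (az_posDef hA p) hK
  have hY₁ := az_posDef hX₁ (1 / p)
  have hY₂ := az_posDef hX₂ (1 / p)
  have hY := az_comb hY₁ hY₂ hl0 hl1
  have cyc : ∀ C Y : Matrix n n ℂ, (C * K * Y * Kᴴ).trace = (Kᴴ * C * K * Y).trace := by
    intro C Y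
    rw [Matrix.trace_mul_comm]
    simp only [Matrix.mul_assoc]
  have key : ∀ {X : Matrix n n ℂ}, X.PosDef →
      X * mpow (mpow X (1 / p)) (1 - p) = mpow X (1 / p) := by
    intro X hX
    rw [az_mpow_mpow hX.posSemidef]
    nth_rewrite 1 [← az_one hX.1]
    rw [az_mul hX]
    congr 1
    field_simp
    ring
  have lieb := az_lieb hA₁ hA₂ hY₁ hY₂ hA hY hl0 hl1 eA rfl K hp0 hp1
  rw [cyc, cyc, cyc, key hX₁, key hX₂] at lieb
  have young := az_young hX.posSemidef hY.posSemidef hp0 hp1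
  have e : (l • mpow (Kᴴ * mpow A₁ p * K) (1 / p) +
      (1 - l) • mpow (Kᴴ * mpow A₂ p * K) (1 / p)).trace.re =
      l * (mpow (Kᴴ * mpow A₁ p * K) (1 / p)).trace.re +
      (1 - l) * (mpow (Kᴴ * mpow A₂ p * K) (1 / p)).trace.re := by
    simp only [Matrix.trace_add,
      Matrix.trace_smul, Complex.add_re, Complex.real_smul, Complex.re_ofReal_mul]
  rw [e] at young
  have : p * (l * (mpow (Kᴴ * mpow A₁ p * K) (1 / p)).trace.re +
      (1 - l) * (mpow (Kᴴ * mpow A₂ p * K) (1 / p)).trace.re) ≤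
      p * (mpow (Kᴴ * mpow A p * K) (1 / p)).trace.re := by linarith
  exact le_of_mul_le_mul_left this hp0

lemma az_cs (P Q : Matrix n n ℂ) :
    (P * Q).trace.re ≤ ((P * Pᴴ).trace.re + (Qᴴ * Q).trace.re) / 2 := by
  have h := (Matrix.posSemidef_conjTranspose_mul_self (Pᴴ - Q)).trace_nonneg
  have h := (Complex.le_def.1 h).1
  simp only [Matrix.conjTranspose_sub, Matrix.conjTranspose_conjTranspose, Matrix.sub_mul,
    Matrix.mul_sub, Matrix.trace_sub, Complex.sub_re, Complex.zero_re] at h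
  have e : (Qᴴ * Pᴴ).trace.re = (P * Q).trace.re := by
    rw [← Matrix.conjTranspose_mul, Matrix.trace_conjTranspose]
    simp
  linarith

lemma az_half {A : Matrix n n ℂ} (hA : A.PosDef) : mpow A (1 / 2) * mpow A (1 / 2) = A := by
  rw [az_mul hA]
  norm_num
  exact az_one hA.1

lemma az_inv {A : Matrix n n ℂ} (hA : A.PosDef) (t : ℝ) : mpow A t * mpow A (-t) = 1 := by
  rw [az_mul hA, add_neg_cancel, az_zero hA.1]

lemma az_inv' {A : Matrix n n ℂ} (hA : A.PosDef) (t : ℝ) : mpow A (-t) * mpow A t = 1 := by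
  rw [az_mul hA, neg_add_cancel, az_zero hA.1]

lemma az_N {A B : Matrix n n ℂ} (hA : A.PosDef) (hB : B.PosDef) :
    (mpow A (1 / 2) * B * mpow A (1 / 2)).PosDef := by
  have := az_conj (K := mpow A (1 / 2)) hB (az_posDef hA _).isUnit
  rwa [az_herm hA.1] at this

/-- Hoelder-type variational bound -/
lemma az_holder {A B G : Matrix n n ℂ} (hA : A.PosDef) (hB : B.PosDef) (hG : G.PosDef)
    {p q z : ℝ} (hp0 : 0 < p) (hp1 : p ≤ 1) (hq0 : 0 < q) (hq1 : q ≤ 1) (hz : z * (p + q) = 1) :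
    (p + q) * (mpow (mpow A (1 / 2) * B * mpow A (1 / 2)) z).trace.re ≤
      p * (mpow (mpow G (1 / 2) * A * mpow G (1 / 2)) (1 / p)).trace.re +
      q * (mpow (mpow G (-(1 / 2)) * B * mpow G (-(1 / 2))) (1 / q)).trace.re := by
  have hN := az_N hA hB
  have ha := az_herm hA.1 (1 / 2)
  have hb := az_herm hB.1 (1 / 2)
  have hg := az_herm hG.1 (1 / 2)
  have hg' := az_herm hG.1 (-(1 / 2))
  have haa := az_half hA
  have hbb := az_half hB
  have hgg := az_inv hG (1 / 2)
  set a := mpow A (1 / 2)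
  set b := mpow B (1 / 2)
  set g := mpow G (1 / 2)
  set g' := mpow G (-(1 / 2))
  set N := a * B * a with hNdef
  have hNs : ∀ s, (mpow N s)ᴴ = mpow N s := fun s => (az_herm hN.1 s).eq
  let c : ℝ := z * (1 - p) / 2
  let d : ℝ := z - 1 - c
  let V : Matrix n n ℂ := mpow N (-(1 / 2)) * (a * b)
  have habab : (a * b) * (a * b)ᴴ = N := by
    rw [Matrix.conjTranspose_mul, ha, hb, hNdef, ← hbb]
    simp only [Matrix.mul_assoc]
  have hVV : V * Vᴴ = 1 := by
    simp only [V]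
    rw [Matrix.conjTranspose_mul (mpow N (-(1 / 2))), hNs, Matrix.mul_assoc,
      ← Matrix.mul_assoc (a * b), habab]
    nth_rewrite 2 [← az_one hN.1]
    rw [az_mul hN, az_mul hN]
    norm_num
    exact az_zero hN.1
  have hVV' : Vᴴ * V = 1 := mul_eq_one_comm.1 hVV
  have hNV : mpow N (1 / 2) * V = a * b := by
    simp only [V]
    rw [← Matrix.mul_assoc, az_inv hN, Matrix.one_mul]
  have cs := az_cs (mpow N c * (a * g)) (g' * b * (a * b)ᴴ * mpow N d)
  have e1 : mpow N c * (a * g) * (g' * b * (a * b)ᴴ * mpow N d) = mpow N z := by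
    have : mpow N c * (a * g) * (g' * b * (a * b)ᴴ * mpow N d) =
        mpow N c * ((a * (g * g') * b) * (a * b)ᴴ) * mpow N d := by
      simp only [Matrix.mul_assoc]
    rw [this, hgg, Matrix.mul_one, habab]
    nth_rewrite 2 [← az_one hN.1]
    rw [az_mul hN, az_mul hN]
    congr 1
    simp only [d]
    ring
  have e2 : (mpow N c * (a * g) * (mpow N c * (a * g))ᴴ).trace =
      ((a * g) * (a * g)ᴴ * mpow (mpow N z) (1 - p)).trace := by
    rw [Matrix.conjTranspose_mul (mpow N c), hNs, Matrix.mul_assoc, Matrix.trace_mul_comm,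
      az_mpow_mpow hN.posSemidef]
    have : z * (1 - p) = c + c := by simp only [c]; ring
    rw [this, ← az_mul hN]
    simp only [Matrix.mul_assoc]
  have y1 := az_young (Matrix.posSemidef_self_mul_conjTranspose (a * g))
    (az_posDef hN z).posSemidef hp0 hp1
  rw [az_trace_comm, ← e2] at y1
  have e3 : (a * g)ᴴ * (a * g) = g * A * g := by
    rw [Matrix.conjTranspose_mul, ha, hg, ← haa]
    simp only [Matrix.mul_assoc]
  rw [e3] at y1
  have e4 : ((g' * b * (a * b)ᴴ * mpow N d)ᴴ * (g' * b * (a * b)ᴴ * mpow N d)).trace =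
      ((V * b * g') * (V * b * g')ᴴ * mpow (mpow N z) (1 - q)).trace := by
    rw [az_mpow_mpow hN.posSemidef]
    have : z * (1 - q) = 1 / 2 + d + (d + 1 / 2) := by
      simp only [c, d]; linear_combination -hz
    rw [this, ← az_mul hN, ← az_mul hN, ← az_mul hN, ← hNV]
    simp only [Matrix.conjTranspose_mul, Matrix.conjTranspose_conjTranspose, hNs, hg'.eq, hb.eq]
    have e : V * b * g' * (g' * (b * Vᴴ)) * (mpow N (1 / 2) * mpow N d * (mpow N d * mpow N (1 / 2)))
      = (V * b * g' * (g' * (b * Vᴴ)) * (mpow N (1 / 2) * mpow N d)) * (mpow N d * mpow N (1 / 2)) := by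
      simp only [Matrix.mul_assoc]
    rw [e, Matrix.trace_mul_comm _ (mpow N d * mpow N (1 / 2))]
    simp only [Matrix.mul_assoc]
  have y2 := az_young (Matrix.posSemidef_self_mul_conjTranspose (V * b * g'))
    (az_posDef hN z).posSemidef hq0 hq1
  rw [az_trace_comm, ← e4] at y2
  have e5 : (V * b * g')ᴴ * (V * b * g') = g' * B * g' := by
    have : (V * b * g')ᴴ * (V * b * g') = g' * (b * (Vᴴ * V) * b) * g' := by
      simp only [Matrix.conjTranspose_mul, hg'.eq, hb.eq, Matrix.mul_assoc]
    rw [this, hVV', Matrix.mul_one, hbb]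
  rw [e5] at y2
  rw [e1] at cs
  linarith

/-- the variational bound is attained -/
lemma az_attain {A B : Matrix n n ℂ} (hA : A.PosDef) (hB : B.PosDef)
    {p q z : ℝ} (hp0 : 0 < p) (hq0 : 0 < q) (hz : z * (p + q) = 1) :
    ∃ G : Matrix n n ℂ, G.PosDef ∧
      (mpow (mpow G (1 / 2) * A * mpow G (1 / 2)) (1 / p)).trace.re =
        (mpow (mpow A (1 / 2) * B * mpow A (1 / 2)) z).trace.re ∧
      (mpow (mpow G (-(1 / 2)) * B * mpow G (-(1 / 2))) (1 / q)).trace.re =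
        (mpow (mpow A (1 / 2) * B * mpow A (1 / 2)) z).trace.re := by
  have hN := az_N hA hB
  have ha := az_herm hA.1 (1 / 2)
  have ha' := az_herm hA.1 (-(1 / 2))
  have hb := az_herm hB.1 (1 / 2)
  have haa := az_half hA
  have hbb := az_half hB
  have haa' := az_inv hA (1 / 2)
  have ha'a := az_inv' hA (1 / 2)
  have hGd := az_conj (K := mpow A (-(1 / 2)))
    (az_posDef hN (p * z)) (az_posDef hA (-(1 / 2))).isUnit
  rw [ha'.eq] at hGd
  set a := mpow A (1 / 2)
  set a' := mpow A (-(1 / 2))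
  set b := mpow B (1 / 2)
  set N := a * B * a with hNdef
  have hNs : ∀ s, (mpow N s)ᴴ = mpow N s := fun s => (az_herm hN.1 s).eq
  set G := a' * mpow N (p * z) * a' with hGdef
  have hg := az_herm hGd.1 (1 / 2)
  have hg' := az_herm hGd.1 (-(1 / 2))
  have hgg := az_half hGd
  have hgg' : mpow G (-(1 / 2)) * mpow G (-(1 / 2)) = a * mpow N (-(p * z)) * a := by
    have h1 : mpow G (-(1 / 2)) * mpow G (-(1 / 2)) * G = 1 := by
      nth_rewrite 3 [← az_one hGd.1]
      rw [az_mul hGd, az_mul hGd]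
      norm_num
      exact az_zero hGd.1
    have h2 : G * (a * mpow N (-(p * z)) * a) = 1 := by
      have : G * (a * mpow N (-(p * z)) * a) =
          a' * (mpow N (p * z) * (a' * a) * mpow N (-(p * z))) * a := by
        rw [hGdef]; simp only [Matrix.mul_assoc]
      rw [this, ha'a, Matrix.mul_one, az_inv hN, Matrix.mul_one, ha'a]
    exact left_inv_eq_right_inv h1 h2
  have habab : (a * b) * (a * b)ᴴ = N := by
    rw [Matrix.conjTranspose_mul, ha, hb, hNdef, ← hbb]
    simp only [Matrix.mul_assoc]
  refine ⟨G, hGd, ?_, ?_⟩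
  · set g := mpow G (1 / 2)
    have e3 : (a * g)ᴴ * (a * g) = g * A * g := by
      rw [Matrix.conjTranspose_mul, ha, hg, ← haa]
      simp only [Matrix.mul_assoc]
    have e4 : (a * g) * (a * g)ᴴ = mpow N (p * z) := by
      have : (a * g) * (a * g)ᴴ = a * (g * g) * a := by
        rw [Matrix.conjTranspose_mul, ha, hg]
        simp only [Matrix.mul_assoc]
      rw [this, hgg]
      have : a * G * a = (a * a') * mpow N (p * z) * (a' * a) := by
        rw [hGdef]; simp only [Matrix.mul_assoc]
      rw [this, haa', ha'a, Matrix.one_mul, Matrix.mul_one]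
    rw [← e3, ← az_trace_comm, e4, az_mpow_mpow hN.posSemidef]
    congr 4
    field_simp
  · set g' := mpow G (-(1 / 2))
    have e1 : (g' * b) * (g' * b)ᴴ = g' * B * g' := by
      rw [Matrix.conjTranspose_mul, hb, hg', ← hbb]
      simp only [Matrix.mul_assoc]
    have e2 : (g' * b)ᴴ * (g' * b) = (mpow N (-(p * z) / 2) * (a * b))ᴴ *
        (mpow N (-(p * z) / 2) * (a * b)) := by
      have h1 : (g' * b)ᴴ * (g' * b) = b * (g' * g') * b := by
        rw [Matrix.conjTranspose_mul, hb, hg']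
        simp only [Matrix.mul_assoc]
      have h2 : -(p * z) = -(p * z) / 2 + -(p * z) / 2 := by ring
      rw [h1, hgg', h2, ← az_mul hN, ← h2]
      simp only [Matrix.conjTranspose_mul, hNs, hb.eq, ha.eq, Matrix.mul_assoc]
    rw [← e1, az_trace_comm, e2, ← az_trace_comm, Matrix.conjTranspose_mul (mpow N _), hNs,
      Matrix.mul_assoc, ← Matrix.mul_assoc (a * b), habab]
    have e3 : N * mpow N (-(p * z) / 2) = mpow N (1 + -(p * z) / 2) := by
      nth_rewrite 1 [← az_one hN.1]
      rw [az_mul hN]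
    rw [e3, az_mul hN, az_mpow_mpow hN.posSemidef]
    congr 4
    field_simp
    linear_combination -2 * hz

lemma az_Q {ρ σ : Matrix n n ℂ} (hρ : ρ.PosDef) (hσ : σ.PosDef) {α z p q : ℝ}
    (hp : α / z = p) (hq : (1 - α) / z = q) :
    Qaz α z ρ σ = (mpow (mpow (mpow ρ p) (1 / 2) * mpow σ q * mpow (mpow ρ p) (1 / 2)) z).trace.re := by
  have hA := az_posDef hρ p
  have hB := az_posDef hσ q
  have e : mpow σ ((1 - α) / (2 * z)) = mpow (mpow σ q) (1 / 2) := by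
    rw [az_mpow_mpow hσ.posSemidef, ← hq]
    congr 1
    ring
  rw [Qaz, e, hp]
  set A := mpow ρ p
  set B := mpow σ q
  have ha := az_herm hA.1 (1 / 2)
  have hb := az_herm hB.1 (1 / 2)
  have haa := az_half hA
  have hbb := az_half hB
  set a := mpow A (1 / 2)
  set b := mpow B (1 / 2)
  have e1 : b * A * b = (a * b)ᴴ * (a * b) := by
    rw [Matrix.conjTranspose_mul, ha, hb, ← haa]
    simp only [Matrix.mul_assoc]
  have e2 : a * B * a = (a * b) * (a * b)ᴴ := by
    rw [Matrix.conjTranspose_mul, ha, hb, ← hbb]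
    simp only [Matrix.mul_assoc]
  rw [e1, e2, az_trace_comm]

lemma az_main_pd {α z : ℝ} (hα0 : 0 < α) (hα1 : α < 1)
    (hz : max α (1 - α) ≤ z) {l : ℝ} (hl0 : 0 ≤ l) (hl1 : l ≤ 1)
    {ρ₁ ρ₂ σ₁ σ₂ : Matrix n n ℂ}
    (hρ₁ : ρ₁.PosDef) (hρ₂ : ρ₂.PosDef) (hσ₁ : σ₁.PosDef) (hσ₂ : σ₂.PosDef) :
    l * Qaz α z ρ₁ σ₁ + (1 - l) * Qaz α z ρ₂ σ₂
      ≤ Qaz α z (l • ρ₁ + (1 - l) • ρ₂) (l • σ₁ + (1 - l) • σ₂) := by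
  have hz1 : α ≤ z := (le_max_left _ _).trans hz
  have hz2 : 1 - α ≤ z := (le_max_right _ _).trans hz
  have hz0 : 0 < z := hα0.trans_le hz1
  obtain ⟨p, hp⟩ : ∃ p, α / z = p := ⟨_, rfl⟩
  obtain ⟨q, hq⟩ : ∃ q, (1 - α) / z = q := ⟨_, rfl⟩
  have hp0 : 0 < p := by rw [← hp]; positivity
  have hq0 : 0 < q := by rw [← hq]; exact div_pos (by linarith) hz0
  have hp1 : p ≤ 1 := by rw [← hp]; exact (div_le_one hz0).2 hz1
  have hq1 : q ≤ 1 := by rw [← hq]; exact (div_le_one hz0).2 hz2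
  have hzz : z * (p + q) = 1 := by rw [← hp, ← hq]; field_simp; ring
  have hρ := az_comb hρ₁ hρ₂ hl0 hl1
  have hσ := az_comb hσ₁ hσ₂ hl0 hl1
  rw [az_Q hρ hσ hp hq, az_Q hρ₁ hσ₁ hp hq, az_Q hρ₂ hσ₂ hp hq]
  obtain ⟨G, hG, e1, e2⟩ := az_attain (az_posDef hρ p) (az_posDef hσ q) hp0 hq0 hzz
  have h1 := az_holder (az_posDef hρ₁ p) (az_posDef hσ₁ q) hG hp0 hp1 hq0 hq1 hzz
  have h2 := az_holder (az_posDef hρ₂ p) (az_posDef hσ₂ q) hG hp0 hp1 hq0 hq1 hzz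
  have k1 := az_epstein hρ₁ hρ₂ hρ hl0 hl1 rfl (az_posDef hG (1 / 2)).isUnit hp0 hp1
  have k2 := az_epstein hσ₁ hσ₂ hσ hl0 hl1 rfl (az_posDef hG (-(1 / 2))).isUnit hq0 hq1
  rw [az_herm hG.1, e1] at k1
  rw [az_herm hG.1, e2] at k2
  have h1' := mul_le_mul_of_nonneg_left h1 hl0
  have h2' := mul_le_mul_of_nonneg_left h2 (sub_nonneg.2 hl1)
  have k1' := mul_le_mul_of_nonneg_left k1 hp0.le
  have k2' := mul_le_mul_of_nonneg_left k2 hq0.le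
  refine le_of_mul_le_mul_left ?_ (add_pos hp0 hq0)
  linarith

section cont
open scoped Matrix.Norms.L2Operator
open Filter Topology

lemma az_tendsto {ι : Type*} {l : Filter ι} {X : ι → Matrix n n ℂ} {X₀ : Matrix n n ℂ}
    (h : Tendsto X l (𝓝 X₀)) (hX : ∀ᶠ i in l, (X i).PosSemidef) (hX₀ : X₀.PosSemidef) {t : ℝ}
    (ht : 0 ≤ t) : Tendsto (fun i => mpow (X i) t) l (𝓝 (mpow X₀ t)) := by
  rw [az_mpow_cfc hX₀.1]
  have hb : ∀ᶠ i in l, ‖X i‖ ≤ ‖X₀‖ + 1 :=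
    (h.norm.eventually (gt_mem_nhds (lt_add_one ‖X₀‖))).mono fun i hi => hi.le
  have key : ∀ Y : Matrix n n ℂ, Y.PosSemidef → ‖Y‖ ≤ ‖X₀‖ + 1 →
      spectrum ℝ Y ⊆ Set.Icc 0 ((‖X₀‖ + 1) * ‖(1 : Matrix n n ℂ)‖) := by
    intro Y hY hn x hx
    refine ⟨az_spec_nonneg hY hx, ?_⟩
    have := spectrum.norm_le_norm_mul_of_mem hx
    refine (le_abs_self x).trans (this.trans ?_)
    gcongr
  have := Filter.Tendsto.cfc (p := IsSelfAdjoint) (isCompact_Icc (a := (0 : ℝ))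
    (b := (‖X₀‖ + 1) * ‖(1 : Matrix n n ℂ)‖))
    (fun x : ℝ => x ^ t) h (hX.and hb |>.mono fun i hi => key _ hi.1 hi.2)
    (hX.mono fun i hi => hi.1.isSelfAdjoint) (key _ hX₀ (by linarith)) hX₀.1.isSelfAdjoint
    (fun x _ => (Real.continuousAt_rpow_const x t (Or.inr ht)).continuousWithinAt)
  refine this.congr' ?_
  filter_upwards [hX] with i hi
  exact (az_mpow_cfc hi.1 t).symm

end cont

open Filter Topology in
lemma az_Q_tendsto {α z : ℝ} (hα0 : 0 < α) (hα1 : α < 1) (hz : 0 < z) {ρ σ : Matrix n n ℂ}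
    (hρ : ρ.PosSemidef) (hσ : σ.PosSemidef) :
    Tendsto (fun ε : ℝ => Qaz α z (ρ + ε • 1) (σ + ε • 1)) (𝓝[>] 0) (𝓝 (Qaz α z ρ σ)) := by
  have pert : ∀ {X : Matrix n n ℂ}, X.PosSemidef → 
      ∀ᶠ ε : ℝ in 𝓝[>] 0, (X + ε • (1 : Matrix n n ℂ)).PosSemidef := by
    intro X hX
    filter_upwards [self_mem_nhdsWithin] with ε hε
    exact hX.add (Matrix.PosSemidef.one.smul (le_of_lt hε))
  have lim : ∀ X : Matrix n n ℂ,
      Tendsto (fun ε : ℝ => X + ε • (1 : Matrix n n ℂ)) (𝓝[>] 0) (𝓝 X) := by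
    intro X
    have h : Continuous (fun ε : ℝ => X + ε • (1 : Matrix n n ℂ)) := by fun_prop
    have h2 := h.tendsto 0
    simp only [zero_smul, add_zero] at h2
    exact h2.mono_left nhdsWithin_le_nhds
  have t1 := az_tendsto (lim σ) (pert hσ) hσ (t := (1 - α) / (2 * z))
    (div_nonneg (by linarith) (by linarith))
  have t2 := az_tendsto (lim ρ) (pert hρ) hρ (t := α / z) (by positivity)
  have ps : ∀ {R S : Matrix n n ℂ}, R.PosSemidef → S.PosSemidef →
      (mpow S ((1 - α) / (2 * z)) * mpow R (α / z) * mpow S ((1 - α) / (2 * z))).PosSemidef := by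
    intro R S hR hS
    have := (az_posSemidef hR (α / z)).mul_mul_conjTranspose_same (mpow S ((1 - α) / (2 * z)))
    rwa [az_herm hS.1] at this
  have t3 := az_tendsto ((t1.mul t2).mul t1)
    (by filter_upwards [pert hρ, pert hσ] with ε h1 h2; exact ps h1 h2) (ps hρ hσ) hz.le
  have c : Continuous (fun X : Matrix n n ℂ => X.trace.re) := by fun_prop
  exact (c.tendsto _).comp t3

end AZ

/-- Joint concavity of `Q_{α,z}` for `0 < α < 1` and `z ≥ max{α, 1−α}`. -/
theorem Qaz_jointly_concave (n : ℕ) (α z : ℝ) (hα0 : 0 < α) (hα1 : α < 1)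
    (hz : max α (1 - α) ≤ z) (lam : ℝ) (hlam0 : 0 ≤ lam) (hlam1 : lam ≤ 1)
    (ρ₁ ρ₂ σ₁ σ₂ : Matrix (Fin n) (Fin n) ℂ)
    (hρ₁ : ρ₁.PosSemidef) (hρ₂ : ρ₂.PosSemidef)
    (hσ₁ : σ₁.PosSemidef) (hσ₂ : σ₂.PosSemidef) :
    lam * Qaz α z ρ₁ σ₁ + (1 - lam) * Qaz α z ρ₂ σ₂
      ≤ Qaz α z (lam • ρ₁ + (1 - lam) • ρ₂) (lam • σ₁ + (1 - lam) • σ₂) := by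
  have hz0 : 0 < z := hα0.trans_le ((le_max_left _ _).trans hz)
  have hρ := (hρ₁.smul hlam0).add (hρ₂.smul (sub_nonneg.2 hlam1))
  have hσ := (hσ₁.smul hlam0).add (hσ₂.smul (sub_nonneg.2 hlam1))
  refine le_of_tendsto_of_tendsto
    (((az_Q_tendsto hα0 hα1 hz0 hρ₁ hσ₁).const_mul lam).add
      ((az_Q_tendsto hα0 hα1 hz0 hρ₂ hσ₂).const_mul (1 - lam)))
    (az_Q_tendsto hα0 hα1 hz0 hρ hσ) ?_
  filter_upwards [self_mem_nhdsWithin] with ε hε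
  have hε : 0 < ε := hε
  have pd : ∀ {X : Matrix (Fin n) (Fin n) ℂ}, X.PosSemidef →
      (X + ε • (1 : Matrix (Fin n) (Fin n) ℂ)).PosDef := fun hX =>
    Matrix.PosDef.posSemidef_add hX (Matrix.PosDef.one.smul hε)
  have h := az_main_pd hα0 hα1 hz hlam0 hlam1 (pd hρ₁) (pd hρ₂) (pd hσ₁) (pd hσ₂)
  have e : ∀ X Y : Matrix (Fin n) (Fin n) ℂ, lam • (X + ε • 1) + (1 - lam) • (Y + ε • 1) =
      lam • X + (1 - lam) • Y + ε • 1 := by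
    intro X Y
    module
  rw [e, e] at h
  exact h
end

section
/- (Monotonicity in z.) Let 0 < α < 1 and 0 < z ≤ z′. Then for all n×n positive semidefinite complex matrices ρ, σ: Q_{α,z}(ρ‖σ) ≥ Q_{α,z′}(ρ‖σ), i.e., Tr((σ^{(1−α)/(2z)} ρ^{α/z} σ^{(1−α)/(2z)})^z) ≥ Tr((σ^{(1−α)/(2z′)} ρ^{α/z′} σ^{(1−α)/(2z′)})^{z′}). -/
open Matrix
open scoped ComplexOrder

section ALT

open scoped MatrixOrder Matrix.Norms.L2Operator

/-- `U diag(d) U*`. -/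
noncomputable def sp {m : Type*} [Fintype m] [DecidableEq m]
    (U : Matrix m m ℂ) (d : m → ℝ) : Matrix m m ℂ :=
  U * Matrix.diagonal (fun i => ((d i : ℝ) : ℂ)) * star U

variable {m : Type*} [Fintype m] [DecidableEq m]

lemma star_sp (U : Matrix m m ℂ) (d : m → ℝ) : star (sp U d) = sp U d := by
  have : star (Matrix.diagonal (fun i => ((d i : ℝ) : ℂ))) =
      Matrix.diagonal (fun i => ((d i : ℝ) : ℂ)) := by
    rw [star_eq_conjTranspose, diagonal_conjTranspose]
    congr 1; ext i; simp
  rw [sp, star_mul, star_mul, star_star, this, Matrix.mul_assoc]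

lemma sp_mul {U : Matrix m m ℂ} (hU : star U * U = 1) (d e : m → ℝ) :
    sp U d * sp U e = sp U (fun i => d i * e i) := by
  have : (Matrix.diagonal (fun i => ((d i * e i : ℝ) : ℂ))) =
      Matrix.diagonal (fun i => ((d i : ℝ) : ℂ)) * Matrix.diagonal (fun i => ((e i : ℝ) : ℂ)) := by
    rw [diagonal_mul_diagonal]; congr 1; ext i; simp
  rw [sp, sp, sp, this]
  calc _ = U * diagonal (fun i => ((d i : ℝ) : ℂ)) * (star U * U) *
        diagonal (fun i => ((e i : ℝ) : ℂ)) * star U := by simp only [Matrix.mul_assoc]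
    _ = _ := by rw [hU]; simp only [Matrix.mul_assoc, Matrix.one_mul]

lemma sp_const {U : Matrix m m ℂ} (hU : U * star U = 1) (c : ℝ) :
    sp U (fun _ => c) = algebraMap ℝ (Matrix m m ℂ) c := by
  have : (Matrix.diagonal (fun _ : m => (c : ℂ))) = (c : ℂ) • (1 : Matrix m m ℂ) := by
    rw [smul_one_eq_diagonal]
  rw [sp, this, Matrix.mul_smul, Matrix.mul_one, Matrix.smul_mul, hU, Algebra.algebraMap_eq_smul_one]
  ext i j; simp

lemma sp_sub (U : Matrix m m ℂ) (d e : m → ℝ) :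
    sp U d - sp U e = sp U (fun i => d i - e i) := by
  have : (Matrix.diagonal (fun i => ((d i - e i : ℝ) : ℂ))) =
      Matrix.diagonal (fun i => ((d i : ℝ) : ℂ)) - Matrix.diagonal (fun i => ((e i : ℝ) : ℂ)) := by
    rw [diagonal_sub]; congr 1; ext i; simp
  rw [sp, sp, sp, this, Matrix.mul_sub, Matrix.sub_mul]

lemma sp_nonneg_iff {U : Matrix m m ℂ} (hU : star U * U = 1) (d : m → ℝ) :
    0 ≤ sp U d ↔ ∀ i, 0 ≤ d i := by
  have key : 0 ≤ (Matrix.diagonal (fun i => ((d i : ℝ) : ℂ))) ↔ ∀ i, 0 ≤ d i := by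
    rw [Matrix.le_iff, sub_zero, Matrix.posSemidef_diagonal_iff]
    simp
  rw [← key]
  constructor
  · intro h
    have := star_left_conjugate_le_conjugate h U
    have e : star U * sp U d * U = diagonal (fun i => ((d i : ℝ) : ℂ)) := by
      calc _ = (star U * U) * diagonal (fun i => ((d i : ℝ) : ℂ)) * (star U * U) := by
            simp only [sp, Matrix.mul_assoc]
        _ = _ := by rw [hU, Matrix.one_mul, Matrix.mul_one]
    rw [e] at this
    simpa using this
  · intro h
    have := star_left_conjugate_le_conjugate h (star U)
    simpa [sp] using this

lemma sp_le_sp_iff {U : Matrix m m ℂ} (hU : star U * U = 1) (d e : m → ℝ) :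
    sp U d ≤ sp U e ↔ ∀ i, d i ≤ e i := by
  rw [← sub_nonneg, sp_sub, sp_nonneg_iff hU]
  simp

lemma sp_le_iff {U : Matrix m m ℂ} (hU : star U * U = 1) (hU' : U * star U = 1) (d : m → ℝ)
    (c : ℝ) : sp U d ≤ algebraMap ℝ (Matrix m m ℂ) c ↔ ∀ i, d i ≤ c := by
  rw [← sp_const hU', sp_le_sp_iff hU]

lemma mpow_sp {U : Matrix m m ℂ} (hU : star U * U = 1) (hU' : U * star U = 1) (d : m → ℝ)
    (t : ℝ) : mpow (sp U d) t = sp U (fun i => d i ^ t) := by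
  have hA : (sp U d).IsHermitian := star_sp U d
  rw [mpow, dif_pos hA]
  set V : Matrix m m ℂ := (hA.eigenvectorUnitary : Matrix m m ℂ) with hV
  have hV1 : star V * V = 1 := Unitary.coe_star_mul_self hA.eigenvectorUnitary
  have hV2 : V * star V = 1 := Unitary.coe_mul_star_self hA.eigenvectorUnitary
  have hs : sp U d = sp V hA.eigenvalues := by
    have := hA.spectral_theorem
    rw [Unitary.conjStarAlgAut_apply] at this
    exact this
  set e := hA.eigenvalues
  change sp V (fun i => e i ^ t) = _
  set W := star U * V with hW
  have h1 : diagonal (fun i => ((d i : ℝ) : ℂ)) * W = W * diagonal (fun i => ((e i : ℝ) : ℂ)) := by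
    calc _ = (star U * U) * diagonal (fun i => ((d i : ℝ) : ℂ)) * (star U * V) := by
          rw [hU, Matrix.one_mul]
      _ = star U * sp U d * V := by simp only [sp, Matrix.mul_assoc]
      _ = star U * sp V e * V := by rw [hs]
      _ = W * diagonal (fun i => ((e i : ℝ) : ℂ)) * (star V * V) := by
          simp only [sp, hW, Matrix.mul_assoc]
      _ = _ := by rw [hV1, Matrix.mul_one]
  have h2 : diagonal (fun i => ((d i ^ t : ℝ) : ℂ)) * W =
      W * diagonal (fun i => ((e i ^ t : ℝ) : ℂ)) := by
    ext i j
    have := congrFun (congrFun h1 i) j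
    rw [diagonal_mul, mul_diagonal] at this ⊢
    by_cases hw : W i j = 0
    · simp [hw]
    · rw [mul_comm] at this
      have h3 := mul_left_cancel₀ hw this
      have h4 : d i = e j := by exact_mod_cast h3
      rw [h4, mul_comm]
  calc sp V (fun i => e i ^ t) = (U * star U) * sp V (fun i => e i ^ t) := by
        rw [hU', Matrix.one_mul]
    _ = U * (W * diagonal (fun i => ((e i ^ t : ℝ) : ℂ))) * star V := by
        simp only [sp, hW, Matrix.mul_assoc]
    _ = U * diagonal (fun i => ((d i ^ t : ℝ) : ℂ)) * star U * (V * star V) := by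
        rw [← h2]; simp only [hW, Matrix.mul_assoc]
    _ = _ := by rw [hV2, Matrix.mul_one]; rfl

/-- Spectral decomposition. -/
lemma exists_sp {A : Matrix m m ℂ} (hA : 0 ≤ A) :
    ∃ (U : Matrix m m ℂ) (d : m → ℝ), star U * U = 1 ∧ U * star U = 1 ∧ (∀ i, 0 ≤ d i) ∧
      A = sp U d := by
  have hP : A.PosSemidef := by simpa [Matrix.le_iff] using hA
  have hH := hP.isHermitian
  refine ⟨hH.eigenvectorUnitary, hH.eigenvalues, Unitary.coe_star_mul_self hH.eigenvectorUnitary,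
    Unitary.coe_mul_star_self hH.eigenvectorUnitary, hP.eigenvalues_nonneg, ?_⟩
  have := hH.spectral_theorem
  rw [Unitary.conjStarAlgAut_apply] at this
  exact this

/-- Sorted spectral decomposition. -/
lemma exists_sp_sorted {n : ℕ} {A : Matrix (Fin n) (Fin n) ℂ} (hA : 0 ≤ A) :
    ∃ (U : Matrix (Fin n) (Fin n) ℂ) (d : Fin n → ℝ), star U * U = 1 ∧ U * star U = 1 ∧
      (∀ i, 0 ≤ d i) ∧ Antitone d ∧ A = sp U d := by
  obtain ⟨U, d, h1, h2, h3, h4⟩ := exists_sp hA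
  let s : Equiv.Perm (Fin n) := Fin.revPerm.trans (Tuple.sort d)
  have hs : star (U.submatrix id s) = (star U).submatrix s id := by
    ext i j; simp [star_apply]
  refine ⟨U.submatrix id s, d ∘ s, ?_, ?_, fun i => h3 _, ?_, ?_⟩
  · rw [hs, Matrix.submatrix_mul _ _ _ id _ Function.bijective_id |>.symm, h1]
    exact Matrix.submatrix_one_equiv s
  · rw [hs, Matrix.submatrix_mul _ _ _ s _ s.bijective |>.symm, h2]
    simp
  · have := Tuple.monotone_sort d
    intro i j hij
    have h := this (Fin.rev_le_rev.2 hij)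
    simpa [s] using h
  · rw [h4, sp, sp, hs]
    have : diagonal (fun i => (((d ∘ s) i : ℝ) : ℂ)) =
        (diagonal (fun i => ((d i : ℝ) : ℂ))).submatrix s s := by
      rw [Matrix.submatrix_diagonal_equiv]; rfl
    rw [this, Matrix.submatrix_mul _ _ _ s _ s.bijective |>.symm,
      Matrix.submatrix_mul _ _ _ s _ s.bijective |>.symm]
    simp

lemma mpow_nonneg {A : Matrix m m ℂ} (hA : 0 ≤ A) (t : ℝ) : 0 ≤ mpow A t := by
  obtain ⟨U, d, h1, h2, h3, rfl⟩ := exists_sp hA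
  rw [mpow_sp h1 h2, sp_nonneg_iff h1]
  exact fun i => Real.rpow_nonneg (h3 i) t

lemma star_mpow {A : Matrix m m ℂ} (hA : 0 ≤ A) (t : ℝ) : star (mpow A t) = mpow A t := by
  obtain ⟨U, d, h1, h2, h3, rfl⟩ := exists_sp hA
  rw [mpow_sp h1 h2, star_sp]

lemma mpow_mpow {A : Matrix m m ℂ} (hA : 0 ≤ A) (s t : ℝ) :
    mpow (mpow A s) t = mpow A (s * t) := by
  obtain ⟨U, d, h1, h2, h3, rfl⟩ := exists_sp hA
  rw [mpow_sp h1 h2, mpow_sp h1 h2, mpow_sp h1 h2]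
  congr 1; ext i; rw [Real.rpow_mul (h3 i)]

lemma mpow_one {A : Matrix m m ℂ} (hA : 0 ≤ A) : mpow A 1 = A := by
  obtain ⟨U, d, h1, h2, h3, rfl⟩ := exists_sp hA
  rw [mpow_sp h1 h2]; simp

lemma mpow_half_mul {A : Matrix m m ℂ} (hA : 0 ≤ A) {t : ℝ} (ht : 0 < t) :
    mpow A (t / 2) * mpow A (t / 2) = mpow A t := by
  obtain ⟨U, d, h1, h2, h3, rfl⟩ := exists_sp hA
  rw [mpow_sp h1 h2, mpow_sp h1 h2, sp_mul h1]
  congr 1; ext i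
  rw [← Real.rpow_add' (h3 i) (by linarith)]; congr 1; ring

lemma mpow_eq_rpow {A : Matrix m m ℂ} (hA : 0 ≤ A) (t : ℝ) : mpow A t = A ^ t := by
  have hP : A.PosSemidef := by simpa [Matrix.le_iff] using hA
  rw [CFC.rpow_eq_cfc_real hA, hP.isHermitian.cfc_eq, mpow, dif_pos hP.isHermitian,
    Matrix.IsHermitian.cfc, Unitary.conjStarAlgAut_apply]
  rfl

lemma flip_le {X : Matrix m m ℂ} {c : ℝ} (hc : 0 ≤ c)
    (h : star X * X ≤ algebraMap ℝ (Matrix m m ℂ) c) :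
    X * star X ≤ algebraMap ℝ (Matrix m m ℂ) c := by
  rw [← CStarAlgebra.norm_le_iff_le_algebraMap _ hc (mul_star_self_nonneg X),
    CStarRing.norm_self_mul_star]
  rw [← CStarAlgebra.norm_le_iff_le_algebraMap _ hc (star_mul_self_nonneg X),
    CStarRing.norm_star_mul_self] at h
  exact h

lemma conj_algebraMap (X : Matrix m m ℂ) (c : ℝ) :
    X * algebraMap ℝ (Matrix m m ℂ) c * X = c • (X * X) := by
  rw [Algebra.algebraMap_eq_smul_one]; simp


lemma norm_ineq_aux {A B : Matrix m m ℂ} (hA : 0 ≤ A) (hB : 0 ≤ B) {r c : ℝ} (hr : 1 ≤ r)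
    (hc : 0 ≤ c)
    (h : mpow B (r / 2) * mpow A r * mpow B (r / 2) ≤ algebraMap ℝ (Matrix m m ℂ) (c ^ r)) :
    ∃ M : ℝ, 0 ≤ M ∧ ∀ δ : ℝ, 0 < δ → mpow B (1 / 2) * A * mpow B (1 / 2) ≤
      algebraMap ℝ (Matrix m m ℂ) ((c ^ r + δ * M) ^ (1 / r)) := by
  have hr0 : 0 < r := by linarith
  obtain ⟨M, hM0, hM⟩ : ∃ M : ℝ, 0 ≤ M ∧ mpow A r ≤ algebraMap ℝ (Matrix m m ℂ) M := by
    obtain ⟨U, a, h1, h2, h3, rfl⟩ := exists_sp hA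
    have h4 : ∀ i, 0 ≤ a i ^ r := fun i => Real.rpow_nonneg (h3 i) r
    refine ⟨∑ i, a i ^ r, Finset.sum_nonneg fun i _ => h4 i, ?_⟩
    rw [mpow_sp h1 h2, sp_le_iff h1 h2]
    intro i
    exact Finset.single_le_sum (f := fun i => a i ^ r) (fun i _ => h4 i) (Finset.mem_univ i)
  refine ⟨M, hM0, fun δ hδ => ?_⟩
  have hcr : 0 ≤ c ^ r := Real.rpow_nonneg hc r
  set C := c ^ r + δ * M with hC
  have hC0 : 0 ≤ C := by positivity
  have s1 : mpow A (r / 2) * mpow B r * mpow A (r / 2) ≤ algebraMap ℝ (Matrix m m ℂ) (c ^ r) := by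
    have := flip_le (X := mpow A (r / 2) * mpow B (r / 2)) hcr (by
      rw [star_mul, star_mpow hA, star_mpow hB]
      convert h using 1
      rw [← mpow_half_mul hA hr0]; simp only [Matrix.mul_assoc])
    rw [star_mul, star_mpow hA, star_mpow hB] at this
    convert this using 1
    rw [← mpow_half_mul hB hr0]; simp only [Matrix.mul_assoc]
  obtain ⟨V, b, h1, h2, h3, rfl⟩ := exists_sp hB
  have hk : ∀ i, 0 < b i ^ r + δ := fun i => by
    have := Real.rpow_nonneg (h3 i) r
    linarith
  set S := sp V (fun i => (b i ^ r + δ) ^ (1 / 2 : ℝ)) with hS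
  have hSS : S * S = mpow (sp V b) r + algebraMap ℝ (Matrix m m ℂ) δ := by
    rw [hS, sp_mul h1, mpow_sp h1 h2, ← sp_const h2, ← sub_eq_iff_eq_add, sp_sub]
    congr 1; ext i
    rw [← Real.rpow_add (hk i)]; norm_num
  have s2 : S * mpow A r * S ≤ algebraMap ℝ (Matrix m m ℂ) C := by
    have := flip_le (X := S * mpow A (r / 2)) hC0 (by
      rw [star_mul, star_mpow hA, hS, star_sp, ← hS]
      have e : mpow A (r / 2) * S * (S * mpow A (r / 2)) =
          mpow A (r / 2) * mpow (sp V b) r * mpow A (r / 2) + δ • mpow A r := by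
        calc _ = mpow A (r / 2) * (S * S) * mpow A (r / 2) := by simp only [Matrix.mul_assoc]
          _ = _ := by
            rw [hSS, Matrix.mul_add, Matrix.add_mul, conj_algebraMap, mpow_half_mul hA hr0]
      rw [e, hC, map_add]
      refine add_le_add s1 ?_
      have := smul_le_smul_of_nonneg_left hM hδ.le
      refine this.trans (le_of_eq ?_)
      rw [map_mul, Algebra.smul_def])
    rw [star_mul, star_mpow hA, hS, star_sp, ← hS] at this
    convert this using 1
    rw [← mpow_half_mul hA hr0]; simp only [Matrix.mul_assoc]
  set T := sp V (fun i => (b i ^ r + δ) ^ (-(1 / 2) : ℝ)) with hT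
  have hTS : T * S = 1 := by
    rw [hT, hS, sp_mul h1, ← map_one (algebraMap ℝ (Matrix m m ℂ)), ← sp_const h2]
    congr 1; ext i
    rw [← Real.rpow_add (hk i)]; norm_num
  have hST : S * T = 1 := by
    rw [hT, hS, sp_mul h1, ← map_one (algebraMap ℝ (Matrix m m ℂ)), ← sp_const h2]
    congr 1; ext i
    rw [← Real.rpow_add (hk i)]; norm_num
  have s3 : mpow A r ≤ sp V (fun i => C * (b i ^ r + δ)⁻¹) := by
    have := star_left_conjugate_le_conjugate s2 T
    have hTs : star T = T := star_sp _ _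
    rw [hTs] at this
    have e : T * (S * mpow A r * S) * T = mpow A r := by
      calc _ = (T * S) * mpow A r * (S * T) := by simp only [Matrix.mul_assoc]
        _ = _ := by rw [hTS, hST, Matrix.one_mul, Matrix.mul_one]
    rw [e] at this
    refine this.trans (le_of_eq ?_)
    rw [← sp_const h2, hT, sp_mul h1, sp_mul h1]
    congr 1; ext i
    rw [mul_right_comm, ← Real.rpow_add (hk i), mul_comm, ← Real.rpow_neg_one]; norm_num
  have hd : ∀ i, 0 ≤ C * (b i ^ r + δ)⁻¹ := fun i => mul_nonneg hC0 (inv_nonneg.2 (hk i).le)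
  have s4 : A ≤ sp V (fun i => (C * (b i ^ r + δ)⁻¹) ^ (1 / r)) := by
    have := CFC.rpow_le_rpow (p := 1 / r) ⟨by positivity, by rw [div_le_one hr0]; exact hr⟩ s3
    rw [← mpow_eq_rpow (mpow_nonneg hA r), mpow_mpow hA,
      ← mpow_eq_rpow ((sp_nonneg_iff h1 _).2 hd), mpow_sp h1 h2, mul_one_div_cancel hr0.ne',
      mpow_one hA] at this
    exact this
  have := star_left_conjugate_le_conjugate s4 (mpow (sp V b) (1 / 2))
  rw [star_mpow hB] at this
  refine this.trans ?_
  rw [mpow_sp h1 h2, sp_mul h1, sp_mul h1, sp_le_iff h1 h2]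
  intro i
  have e1 : b i ^ (1 / 2 : ℝ) * b i ^ (1 / 2 : ℝ) = (b i ^ r) ^ (1 / r) := by
    rw [← Real.rpow_add' (h3 i) (by norm_num), ← Real.rpow_mul (h3 i), mul_one_div_cancel hr0.ne']
    norm_num
  have hbr := Real.rpow_nonneg (h3 i) r
  rw [mul_right_comm, e1, ← Real.mul_rpow hbr (hd i)]
  refine Real.rpow_le_rpow (mul_nonneg hbr (hd i)) ?_ (by positivity)
  rw [← mul_assoc, ← div_eq_mul_inv, div_le_iff₀ (hk i)]
  nlinarith

lemma norm_ineq {A B : Matrix m m ℂ} (hA : 0 ≤ A) (hB : 0 ≤ B) {r c : ℝ} (hr : 1 ≤ r)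
    (hc : 0 ≤ c)
    (h : mpow B (r / 2) * mpow A r * mpow B (r / 2) ≤ algebraMap ℝ (Matrix m m ℂ) (c ^ r)) :
    mpow B (1 / 2) * A * mpow B (1 / 2) ≤ algebraMap ℝ (Matrix m m ℂ) c := by
  have hr0 : 0 < r := by linarith
  obtain ⟨M, hM, H⟩ := norm_ineq_aux hA hB hr hc h
  have hX : 0 ≤ mpow B (1 / 2) * A * mpow B (1 / 2) := by
    have := star_left_conjugate_le_conjugate hA (mpow B (1 / 2))
    rw [star_mpow hB] at this
    simpa using this
  obtain ⟨W, x, h1, h2, h3, h4⟩ := exists_sp hX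
  rw [h4] at H ⊢
  simp only [sp_le_iff h1 h2] at H ⊢
  intro i
  have ht : Filter.Tendsto (fun δ : ℝ => (c ^ r + δ * M) ^ (1 / r)) (nhdsWithin 0 (Set.Ioi 0))
      (nhds c) := by
    have hcont : Continuous (fun δ : ℝ => (c ^ r + δ * M) ^ (1 / r)) :=
      Continuous.rpow_const (by fun_prop) (fun _ => Or.inr (by positivity))
    have := (hcont.tendsto 0).mono_left (nhdsWithin_le_nhds (s := Set.Ioi 0))
    simpa [← Real.rpow_mul hc, mul_inv_cancel₀ hr0.ne'] using this
  refine ge_of_tendsto ht ?_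
  filter_upwards [self_mem_nhdsWithin] with δ hδ
  exact H δ hδ i

/-- The `k`-th compound matrix. -/
noncomputable def cmpd {n : ℕ} (k : ℕ) (M : Matrix (Fin n) (Fin n) ℂ) :
    Matrix (Set.powersetCard (Fin n) k) (Set.powersetCard (Fin n) k) ℂ :=
  LinearMap.toMatrix ((Pi.basisFun ℂ (Fin n)).exteriorPower k)
    ((Pi.basisFun ℂ (Fin n)).exteriorPower k) (exteriorPower.map k (Matrix.toLin' M))

lemma cmpd_mul {n : ℕ} (k : ℕ) (M N : Matrix (Fin n) (Fin n) ℂ) :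
    cmpd k (M * N) = cmpd k M * cmpd k N := by
  rw [cmpd, cmpd, cmpd, ← LinearMap.toMatrix_comp, Matrix.toLin'_mul, exteriorPower.map_comp]

lemma cmpd_one {n : ℕ} (k : ℕ) : cmpd k (1 : Matrix (Fin n) (Fin n) ℂ) = 1 := by
  rw [cmpd, Matrix.toLin'_one, exteriorPower.map_id, LinearMap.toMatrix_id]

lemma cmpd_apply {n : ℕ} (k : ℕ) (M : Matrix (Fin n) (Fin n) ℂ)
    (s t : Set.powersetCard (Fin n) k) :
    cmpd k M s t = (M.submatrix (Set.powersetCard.ofFinEmbEquiv.symm s)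
      (Set.powersetCard.ofFinEmbEquiv.symm t)).det := by
  rw [cmpd, LinearMap.toMatrix_apply, exteriorPower.basis_repr_apply, exteriorPower.basis_apply,
    exteriorPower.map_apply_ιMulti_family, exteriorPower.ιMulti_family,
    exteriorPower.ιMultiDual_apply_ιMulti, ← Matrix.det_transpose]
  congr 1
  ext i j
  simp

lemma cmpd_star {n : ℕ} (k : ℕ) (M : Matrix (Fin n) (Fin n) ℂ) :
    cmpd k (star M) = star (cmpd k M) := by
  ext s t
  rw [star_apply, cmpd_apply, cmpd_apply, ← Matrix.det_conjTranspose]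
  rfl

lemma cmpd_diagonal {n : ℕ} (k : ℕ) (d : Fin n → ℂ) :
    cmpd k (diagonal d) =
      diagonal (fun s => ∏ i, d (Set.powersetCard.ofFinEmbEquiv.symm s i)) := by
  have h : ∀ t : Set.powersetCard (Fin n) k, exteriorPower.map k (Matrix.toLin' (diagonal d))
      ((Pi.basisFun ℂ (Fin n)).exteriorPower k t) =
      (∏ i, d (Set.powersetCard.ofFinEmbEquiv.symm t i)) •
        ((Pi.basisFun ℂ (Fin n)).exteriorPower k t) := by
    intro t
    rw [exteriorPower.basis_apply, exteriorPower.map_apply_ιMulti_family,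
      exteriorPower.ιMulti_family, exteriorPower.ιMulti_family, ← AlternatingMap.map_smul_univ]
    congr 1
    ext i j
    simp [Matrix.diagonal_mulVec_single, Pi.single_apply]
  ext s t
  rw [cmpd, LinearMap.toMatrix_apply, h, map_smul, Module.Basis.repr_self]
  by_cases hst : s = t
  · subst hst; simp
  · simp [diagonal_apply_ne _ hst, Finsupp.single_apply, Ne.symm hst]

lemma cmpd_sp {n : ℕ} (k : ℕ) (U : Matrix (Fin n) (Fin n) ℂ) (d : Fin n → ℝ) :
    cmpd k (sp U d) =
      sp (cmpd k U) (fun s => ∏ i, d (Set.powersetCard.ofFinEmbEquiv.symm s i)) := by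
  rw [sp, sp, cmpd_mul, cmpd_mul, cmpd_star, cmpd_diagonal]
  simp

lemma cmpd_unitary {n : ℕ} (k : ℕ) {U : Matrix (Fin n) (Fin n) ℂ} (hU : star U * U = 1) :
    star (cmpd k U) * cmpd k U = 1 := by
  rw [← cmpd_star, ← cmpd_mul, hU, cmpd_one]

lemma cmpd_unitary' {n : ℕ} (k : ℕ) {U : Matrix (Fin n) (Fin n) ℂ} (hU : U * star U = 1) :
    cmpd k U * star (cmpd k U) = 1 := by
  rw [← cmpd_star, ← cmpd_mul, hU, cmpd_one]

lemma cmpd_nonneg {n : ℕ} (k : ℕ) {A : Matrix (Fin n) (Fin n) ℂ} (hA : 0 ≤ A) :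
    0 ≤ cmpd k A := by
  obtain ⟨U, d, h1, h2, h3, rfl⟩ := exists_sp hA
  rw [cmpd_sp, sp_nonneg_iff (cmpd_unitary k h1)]
  exact fun s => Finset.prod_nonneg fun i _ => h3 _

lemma cmpd_mpow {n : ℕ} (k : ℕ) {A : Matrix (Fin n) (Fin n) ℂ} (hA : 0 ≤ A) (t : ℝ) :
    cmpd k (mpow A t) = mpow (cmpd k A) t := by
  obtain ⟨U, d, h1, h2, h3, rfl⟩ := exists_sp hA
  rw [mpow_sp h1 h2, cmpd_sp, cmpd_sp, mpow_sp (cmpd_unitary k h1) (cmpd_unitary' k h2)]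
  congr 1; ext s
  rw [Real.finsetProd_rpow]
  exact fun i _ => h3 _

/-- For an antitone nonnegative tuple, products over `k`-subsets are at most the product of the
first `k` entries. -/
lemma prod_le_prod_first {n k : ℕ} (hk : k ≤ n) {d : Fin n → ℝ} (h0 : ∀ i, 0 ≤ d i)
    (hd : Antitone d) (e : Fin k ↪o Fin n) :
    ∏ i, d (e i) ≤ ∏ i : Fin k, d (Fin.castLE hk i) := by
  refine Finset.prod_le_prod (fun i _ => h0 _) fun i _ => hd ?_
  have : ∀ (j : ℕ) (hj : j < k), j ≤ (e ⟨j, hj⟩ : ℕ) := by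
    intro j
    induction j with
    | zero => intro _; exact Nat.zero_le _
    | succ j ih =>
      intro hj
      have h1 := ih (by omega)
      have h2 : e ⟨j, by omega⟩ < e ⟨j + 1, hj⟩ := e.strictMono (by simp)
      have h3 : (e ⟨j, by omega⟩ : ℕ) < e ⟨j + 1, hj⟩ := h2
      omega
  exact this i i.2

lemma abel_aux (c d : ℕ → ℝ) (N : ℕ) (hc : ∀ i, i + 1 < N → c (i + 1) ≤ c i)
    (hd : ∀ k, k ≤ N → 0 ≤ ∑ i ∈ Finset.range k, d i) :
    ∀ k, k + 1 ≤ N → c k * ∑ i ∈ Finset.range (k + 1), d i ≤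
      ∑ i ∈ Finset.range (k + 1), c i * d i := by
  intro k
  induction k with
  | zero => intro _; simp
  | succ k ih =>
    intro hk
    have h1 := ih (by omega)
    rw [Finset.sum_range_succ, Finset.sum_range_succ (fun i => c i * d i), mul_add]
    have := mul_le_mul_of_nonneg_right (hc k (by omega)) (hd (k + 1) (by omega))
    linarith

lemma wmaj_pos (a b : ℕ → ℝ) (N : ℕ) (ha : ∀ i, i < N → 0 < a i) (hb : ∀ i, i < N → 0 ≤ b i)
    (hanti : ∀ i, i + 1 < N → a (i + 1) ≤ a i)
    (h : ∀ k, k ≤ N → ∏ i ∈ Finset.range k, a i ≤ ∏ i ∈ Finset.range k, b i) :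
    ∑ i ∈ Finset.range N, a i ≤ ∑ i ∈ Finset.range N, b i := by
  have hapos : ∀ k, k ≤ N → 0 < ∏ i ∈ Finset.range k, a i := fun k hk =>
    Finset.prod_pos fun i hi => ha i (by have := Finset.mem_range.1 hi; omega)
  have hbpos : ∀ i, i < N → 0 < b i := by
    intro i hi
    refine lt_of_le_of_ne (hb i hi) fun h0 => ?_
    have h1 := (hapos (i + 1) hi).trans_le (h (i + 1) hi)
    rw [Finset.prod_range_succ, ← h0, mul_zero] at h1
    exact lt_irrefl _ h1
  have hlog : ∀ k, k ≤ N → 0 ≤ ∑ i ∈ Finset.range k, (Real.log (b i) - Real.log (a i)) := by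
    intro k hk
    rw [Finset.sum_sub_distrib, ← Real.log_prod, ← Real.log_prod, sub_nonneg]
    · exact Real.log_le_log (hapos k hk) (h k hk)
    · intro i hi; exact (ha i (by have := Finset.mem_range.1 hi; omega)).ne'
    · intro i hi; exact (hbpos i (by have := Finset.mem_range.1 hi; omega)).ne'
  have h1 : 0 ≤ ∑ i ∈ Finset.range N, a i * (Real.log (b i) - Real.log (a i)) := by
    rcases N with _ | N
    · simp
    · refine le_trans ?_ (abel_aux a _ (N + 1) hanti hlog N le_rfl)
      exact mul_nonneg (ha N (by omega)).le (hlog _ le_rfl)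
  have h2 : ∑ i ∈ Finset.range N, a i * (Real.log (b i) - Real.log (a i)) ≤
      ∑ i ∈ Finset.range N, (b i - a i) := by
    refine Finset.sum_le_sum fun i hi => ?_
    have hi' := Finset.mem_range.1 hi
    have hai := ha i hi'
    have hbi := hbpos i hi'
    rw [← Real.log_div hbi.ne' hai.ne']
    have := Real.log_le_sub_one_of_pos (div_pos hbi hai)
    calc a i * Real.log (b i / a i) ≤ a i * (b i / a i - 1) :=
          mul_le_mul_of_nonneg_left this hai.le
      _ = b i - a i := by field_simp
  rw [Finset.sum_sub_distrib] at h2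
  linarith

lemma wmaj (a b : ℕ → ℝ) (N : ℕ) (ha : ∀ i, i < N → 0 ≤ a i) (hb : ∀ i, i < N → 0 ≤ b i)
    (hanti : ∀ i, i + 1 < N → a (i + 1) ≤ a i)
    (h : ∀ k, k ≤ N → ∏ i ∈ Finset.range k, a i ≤ ∏ i ∈ Finset.range k, b i) :
    ∑ i ∈ Finset.range N, a i ≤ ∑ i ∈ Finset.range N, b i := by
  induction N with
  | zero => simp
  | succ N ih =>
    by_cases h0 : 0 < a N
    · refine wmaj_pos a b (N + 1) ?_ hb hanti h
      have : ∀ j, j ≤ N → 0 < a (N - j) := by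
        intro j
        induction j with
        | zero => intro _; simpa using h0
        | succ j ihj =>
          intro hj
          have h1 := ihj (by omega)
          have h2 := hanti (N - (j + 1)) (by omega)
          rw [show N - (j + 1) + 1 = N - j by omega] at h2
          linarith
      intro i hi
      have := this (N - i) (by omega)
      rwa [show N - (N - i) = i by omega] at this
    · have := ih (fun i hi => ha i (by omega)) (fun i hi => hb i (by omega))
        (fun i hi => hanti i (by omega)) (fun k hk => h k (by omega))
      rw [Finset.sum_range_succ, Finset.sum_range_succ]
      have := hb N (by omega)
      linarith

lemma wmaj_fin {n : ℕ} {a b : Fin n → ℝ} (ha : ∀ i, 0 ≤ a i) (hb : ∀ i, 0 ≤ b i)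
    (hanti : Antitone a)
    (h : ∀ k (hk : k ≤ n), ∏ i : Fin k, a (Fin.castLE hk i) ≤ ∏ i : Fin k, b (Fin.castLE hk i)) :
    ∑ i, a i ≤ ∑ i, b i := by
  let a' : ℕ → ℝ := fun i => if hi : i < n then a ⟨i, hi⟩ else 0
  let b' : ℕ → ℝ := fun i => if hi : i < n then b ⟨i, hi⟩ else 0
  have hpr : ∀ (f : Fin n → ℝ) k (hk : k ≤ n), ∏ i : Fin k, f (Fin.castLE hk i) =
      ∏ i ∈ Finset.range k, (if hi : i < n then f ⟨i, hi⟩ else 0) := by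
    intro f k hk
    rw [Finset.prod_range]
    refine Finset.prod_congr rfl fun i _ => ?_
    rw [dif_pos (by omega)]; rfl
  have hsm : ∀ (f : Fin n → ℝ), ∑ i, f i =
      ∑ i ∈ Finset.range n, (if hi : i < n then f ⟨i, hi⟩ else 0) := by
    intro f
    rw [Finset.sum_range]
    refine Finset.sum_congr rfl fun i _ => ?_
    rw [dif_pos i.2]
  rw [hsm a, hsm b]
  refine wmaj a' b' n ?_ ?_ ?_ ?_
  · intro i hi; simp only [a', dif_pos hi]; exact ha _
  · intro i hi; simp only [b', dif_pos hi]; exact hb _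
  · intro i hi
    simp only [a', dif_pos hi, dif_pos (show i < n by omega)]
    exact hanti (by simp [Fin.le_def])
  · intro k hk
    have := h k hk
    rwa [hpr a, hpr b] at this

lemma trace_sp {U : Matrix m m ℂ} (hU : star U * U = 1) (d : m → ℝ) :
    (sp U d).trace.re = ∑ i, d i := by
  rw [sp, Matrix.mul_assoc, Matrix.trace_mul_comm, Matrix.mul_assoc, hU, Matrix.mul_one,
    Matrix.trace_diagonal]
  simp

/-- Araki–Lieb–Thirring. -/
lemma alt_ineq {n : ℕ} {A B : Matrix (Fin n) (Fin n) ℂ} (hA : 0 ≤ A) (hB : 0 ≤ B) {r q : ℝ}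
    (hr : 1 ≤ r) (hq : 0 < q) :
    (mpow (mpow B (1 / 2) * A * mpow B (1 / 2)) (r * q)).trace.re ≤
      (mpow (mpow B (r / 2) * mpow A r * mpow B (r / 2)) q).trace.re := by
  have hr0 : 0 < r := by linarith
  have hconj : ∀ {Z : Matrix (Fin n) (Fin n) ℂ} (t : ℝ), 0 ≤ Z → 0 ≤ mpow B t * Z * mpow B t := by
    intro Z t hZ
    have := star_left_conjugate_le_conjugate hZ (mpow B t)
    rw [star_mpow hB] at this
    simpa using this
  obtain ⟨U, a, U1, U2, a0, ad, hX⟩ := exists_sp_sorted (hconj (1 / 2) hA)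
  obtain ⟨V, b, V1, V2, b0, bd, hY⟩ := exists_sp_sorted (hconj (r / 2) (mpow_nonneg hA r))
  rw [hX, hY, mpow_sp U1 U2, mpow_sp V1 V2, trace_sp U1, trace_sp V1]
  refine wmaj_fin (fun i => Real.rpow_nonneg (a0 i) _) (fun i => Real.rpow_nonneg (b0 i) _) ?_ ?_
  · intro i j hij
    exact Real.rpow_le_rpow (a0 j) (ad hij) (by positivity)
  intro k hk
  rw [Real.finsetProd_rpow _ _ (fun i _ => a0 _), Real.finsetProd_rpow _ _ (fun i _ => b0 _)]
  set P := ∏ i : Fin k, b (Fin.castLE hk i) with hP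
  have hP0 : 0 ≤ P := Finset.prod_nonneg fun i _ => b0 _
  have hcY : cmpd k (sp V b) ≤ algebraMap ℝ _ ((P ^ (1 / r)) ^ r) := by
    rw [← Real.rpow_mul hP0, one_div_mul_cancel hr0.ne', Real.rpow_one, cmpd_sp,
      sp_le_iff (cmpd_unitary k V1) (cmpd_unitary' k V2)]
    exact fun s => prod_le_prod_first hk b0 bd _
  rw [← hY, cmpd_mul, cmpd_mul, cmpd_mpow k hA, cmpd_mpow k hB] at hcY
  have := norm_ineq (cmpd_nonneg k hA) (cmpd_nonneg k hB) hr (Real.rpow_nonneg hP0 _) hcY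
  rw [← cmpd_mpow k hB, ← cmpd_mul, ← cmpd_mul, hX, cmpd_sp,
    sp_le_iff (cmpd_unitary k U1) (cmpd_unitary' k U2)] at this
  have h1 := this (Set.powersetCard.ofFinEmbEquiv (Fin.castLEOrderEmb hk))
  simp only [Equiv.symm_apply_apply] at h1
  have h2 : ∏ i : Fin k, a (Fin.castLE hk i) ≤ P ^ (1 / r) := h1
  have h3 := Real.rpow_le_rpow (Finset.prod_nonneg fun i _ => a0 _) h2
    (show 0 ≤ r * q by positivity)
  refine h3.trans (le_of_eq ?_)
  rw [← Real.rpow_mul hP0]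
  congr 1
  field_simp

lemma Qaz_antitone_aux (n : ℕ) (α z z' : ℝ) 
    (hz : 0 < z) (hzz' : z ≤ z')
    (ρ σ : Matrix (Fin n) (Fin n) ℂ) (hρ : ρ.PosSemidef) (hσ : σ.PosSemidef) :
    Qaz α z' ρ σ ≤ Qaz α z ρ σ := by
  have hz' : 0 < z' := by linarith
  have hρ0 : 0 ≤ ρ := by simpa [Matrix.le_iff] using hρ
  have hσ0 : 0 ≤ σ := by simpa [Matrix.le_iff] using hσ
  have := alt_ineq (mpow_nonneg hρ0 (α / z')) (mpow_nonneg hσ0 ((1 - α) / z')) (r := z' / z)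
    (q := z) ((one_le_div hz).2 hzz') hz
  rw [mpow_mpow hρ0, mpow_mpow hσ0, mpow_mpow hσ0, div_mul_cancel₀ _ hz.ne',
    show (1 - α) / z' * (1 / 2) = (1 - α) / (2 * z') by field_simp,
    show (1 - α) / z' * (z' / z / 2) = (1 - α) / (2 * z) by field_simp,
    show α / z' * (z' / z) = α / z by field_simp] at this
  exact this

end ALT

/-- Monotonicity of `Q_{α,z}` in `z` for `0 < α < 1`:
if `0 < z ≤ z'` then `Q_{α,z}(ρ‖σ) ≥ Q_{α,z'}(ρ‖σ)`. -/
theorem Qaz_antitone_in_z (n : ℕ) (α z z' : ℝ) (hα0 : 0 < α) (hα1 : α < 1)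
    (hz : 0 < z) (hzz' : z ≤ z')
    (ρ σ : Matrix (Fin n) (Fin n) ℂ) (hρ : ρ.PosSemidef) (hσ : σ.PosSemidef) :
    Qaz α z' ρ σ ≤ Qaz α z ρ σ := by
  exact Qaz_antitone_aux n α z z' hz hzz' ρ σ hρ hσ
end
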